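/- arXiv:1902.07252 — 3 statements merged into one kernel-verified Lean document; each statement's English description precedes it below -/
import Mathlib

section
/- Let δ > 0 and let z ∈ T_L ∩ H_L with ‖z‖_∞ ≤ L/2. If ⟨φ_o^1 φ_z^1⟩_{L,N,β} ≥ 1/N − δ, then for every y ∈ Q_z ∩ H_L one has ⟨φ_o^1 φ_y^1⟩_{L,N,β} ≥ 1/N − 2^d δ. -/
open MeasureTheory Metric
open scoped RealInnerProductSpace BigOperators

/-- Vertices of the torus `(ℤ/Lℤ)^d`. -/
abbrev TorusPt (d L : ℕ) := Fin d → ZMod L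

/-- Nearest-neighbour adjacency on the torus: `x` and `y` differ by `±1 (mod L)`
in exactly one coordinate. -/
def torusAdj {d L : ℕ} (x y : TorusPt d L) : Prop :=
  ∃ j : Fin d, y = Function.update x j (x j + 1) ∨ y = Function.update x j (x j - 1)

instance {d L : ℕ} (x y : TorusPt d L) : Decidable (torusAdj x y) := by
  unfold torusAdj; infer_instance

/-- The unit sphere `S^{N-1} ⊂ ℝ^N`. -/
abbrev SpinSphere (N : ℕ) := sphere (0 : EuclideanSpace ℝ (Fin N)) 1

/-- A spin configuration on the torus. -/
abbrev SpinCfg (d L N : ℕ) := TorusPt d L → SpinSphere N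

/-- The uniform probability measure on the unit sphere `S^{N-1}`. -/
noncomputable def sphereUniform (N : ℕ) : Measure (SpinSphere N) :=
  ((volume : Measure (EuclideanSpace ℝ (Fin N))).toSphere Set.univ)⁻¹ •
    (volume : Measure (EuclideanSpace ℝ (Fin N))).toSphere

/-- The product over vertices of the uniform probability measures on the sphere. -/
noncomputable def spinMeasure (d L N : ℕ) [NeZero L] : Measure (SpinCfg d L N) :=
  Measure.pi fun _ : TorusPt d L => sphereUniform N

/-- The Hamiltonian `H(φ) = -∑_{{x,y} edge} φ_x · φ_y`; every unordered
nearest-neighbour edge appears exactly twice in the double sum below. -/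
noncomputable def hamiltonian {d L N : ℕ} [NeZero L] (φ : SpinCfg d L N) : ℝ :=
  -(1 / 2) * ∑ x : TorusPt d L, ∑ y : TorusPt d L,
    if torusAdj x y then
      ⟪(φ x : EuclideanSpace ℝ (Fin N)), (φ y : EuclideanSpace ℝ (Fin N))⟫
    else 0

/-- The Gibbs expectation `⟨f⟩_{L,N,β}`. -/
noncomputable def gibbsExp (d L N : ℕ) [NeZero L] (β : ℝ) (f : SpinCfg d L N → ℝ) : ℝ :=
  (∫ φ, Real.exp (-β * hamiltonian φ) ∂(spinMeasure d L N))⁻¹ *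
    ∫ φ, f φ * Real.exp (-β * hamiltonian φ) ∂(spinMeasure d L N)

/-- The spin-spin correlation `⟨φ_x ⬝ φ_y⟩_{L,N,β}`. -/
noncomputable def corrDot (d L N : ℕ) [NeZero L] (β : ℝ) (x y : TorusPt d L) : ℝ :=
  gibbsExp d L N β fun φ =>
    ⟪(φ x : EuclideanSpace ℝ (Fin N)), (φ y : EuclideanSpace ℝ (Fin N))⟫

/-- The correlation `⟨φ_x^1 φ_y^1⟩_{L,N,β}` of first components. -/
noncomputable def corrOne (d L N : ℕ) [NeZero L] [NeZero N] (β : ℝ) (x y : TorusPt d L) : ℝ :=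
  gibbsExp d L N β fun φ =>
    (φ x : EuclideanSpace ℝ (Fin N)) 0 * (φ y : EuclideanSpace ℝ (Fin N)) 0

/-- The origin of the torus. -/
def torusOrigin (d L : ℕ) : TorusPt d L := fun _ => 0

/-- The point `n • e_i` on the `i`-th cartesian axis. -/
def axisPt (d L : ℕ) (i : Fin d) (n : ℕ) : TorusPt d L :=
  fun k => if k = i then (n : ZMod L) else 0

/-- The sup torus norm `‖z‖_∞ = max_i min(z_i, L - z_i)`. -/
def tnormInf {d L : ℕ} (z : TorusPt d L) : ℕ :=
  Finset.univ.sup fun i : Fin d => min (z i).val (L - (z i).val)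

/-- Reflection of torus sites through the plane of sites `{x : x_i = m}`:
`Θ(x)_i = 2m - x_i (mod L)` and the other coordinates are unchanged. -/
def reflSite {d L : ℕ} (i : Fin d) (m : ℕ) (x : TorusPt d L) : TorusPt d L :=
  Function.update x i (2 * (m : ZMod L) - x i)

/-- Membership in the half-torus `T_L^+ = {x : x_i - m (mod L) ∈ {0,…,L/2}}`. -/
def inPlusSite {d L : ℕ} (i : Fin d) (m : ℕ) (x : TorusPt d L) : Prop :=
  (x i - (m : ZMod L)).val ≤ L / 2

/-- Membership in the other half-torus `T_L^- = Θ(T_L^+)`. -/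
def inMinusSite {d L : ℕ} (i : Fin d) (m : ℕ) (x : TorusPt d L) : Prop :=
  inPlusSite i m (reflSite i m x)

/-- Membership in the fixed-point set `T_L^R = {x : x_i = m or x_i = m + L/2 (mod L)}`. -/
def inFixedSite {d L : ℕ} (i : Fin d) (m : ℕ) (x : TorusPt d L) : Prop :=
  (x i - (m : ZMod L)).val = 0 ∨ (x i - (m : ZMod L)).val = L / 2

instance {d L : ℕ} (i : Fin d) (m : ℕ) : DecidablePred (inPlusSite (d := d) (L := L) i m) :=
  fun x => by unfold inPlusSite; infer_instance

instance {d L : ℕ} (i : Fin d) (m : ℕ) : DecidablePred (inMinusSite (d := d) (L := L) i m) :=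
  fun x => by unfold inMinusSite inPlusSite; infer_instance

instance {d L : ℕ} (i : Fin d) (m : ℕ) : DecidablePred (inFixedSite (d := d) (L := L) i m) :=
  fun x => by unfold inFixedSite; infer_instance

/-- Reflection through sites acting on spin configurations: `(Θφ)_x = φ_{Θ(x)}`. -/
def reflSiteCfg {d L N : ℕ} (i : Fin d) (m : ℕ) (φ : SpinCfg d L N) : SpinCfg d L N :=
  fun x => φ (reflSite i m x)

/-- The set `H_L` of vertices with all coordinates nonzero, together with the
nonzero points of the cartesian axes. -/
def inHL {d L : ℕ} (x : TorusPt d L) : Prop :=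
  (∀ j, x j ≠ 0) ∨ ∃ i, x i ≠ 0 ∧ ∀ j, j ≠ i → x j = 0

/-- `ẑ_i = min(z_i, L - z_i)`, the torus distance of the `i`-th coordinate from `0`. -/
def hatCoord {d L : ℕ} (z : TorusPt d L) (i : Fin d) : ℕ :=
  min (z i).val (L - (z i).val)

/-- The box `Q_z = {x : ∀ i, x_i ≤ ẑ_i or x_i > L - ẑ_i}` with corner `z`. -/
def inBoxQ {d L : ℕ} (z x : TorusPt d L) : Prop :=
  ∀ i, (x i).val ≤ hatCoord z i ∨ L - hatCoord z i < (x i).val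

theorem cts_integrable {X : Type*} [TopologicalSpace X] [CompactSpace X] [MeasurableSpace X]
    [OpensMeasurableSpace X] (ν : Measure X) [IsFiniteMeasure ν] {f : X → ℝ}
    (hf : Continuous f) : Integrable f ν :=
  hf.integrable_of_hasCompactSupport (HasCompactSupport.of_compactSpace f)

theorem psd_pow {X J : Type*} [Fintype J] [TopologicalSpace X] [CompactSpace X]
    [MeasurableSpace X] [BorelSpace X] [SecondCountableTopology X]
    (ν : Measure X) [IsFiniteMeasure ν] (k : X → ℝ) (hk : Continuous k)
    (u : J → X → ℝ) (hu : ∀ j, Continuous (u j)) (n : ℕ) :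
    0 ≤ ∫ p : X × X, k p.1 * k p.2 * (∑ j, u j p.1 * u j p.2) ^ n ∂(ν.prod ν) := by
  classical
  have e : ∀ p : X × X, k p.1 * k p.2 * (∑ j, u j p.1 * u j p.2) ^ n
      = ∑ w : Fin n → J, (k p.1 * ∏ i, u (w i) p.1) * (k p.2 * ∏ i, u (w i) p.2) := by
    intro p
    have : (∑ j, u j p.1 * u j p.2) ^ n = ∏ _i : Fin n, ∑ j, u j p.1 * u j p.2 := by simp
    rw [this, Finset.prod_univ_sum, Finset.mul_sum, Fintype.piFinset_univ]
    refine Finset.sum_congr rfl fun w _ => ?_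
    rw [Finset.prod_mul_distrib]; ring
  simp_rw [e]
  rw [integral_finsetSum]
  · refine Finset.sum_nonneg fun w _ => ?_
    rw [integral_prod_mul (fun x => k x * ∏ i, u (w i) x) (fun x => k x * ∏ i, u (w i) x)]
    exact mul_self_nonneg _
  · intro w _
    apply cts_integrable
    fun_prop

theorem psd_exp {X J : Type*} [Fintype J] [TopologicalSpace X] [CompactSpace X]
    [MeasurableSpace X] [BorelSpace X] [SecondCountableTopology X]
    (ν : Measure X) [IsFiniteMeasure ν] (k : X → ℝ) (hk : Continuous k)
    (u : J → X → ℝ) (hu : ∀ j, Continuous (u j)) :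
    0 ≤ ∫ p : X × X, k p.1 * k p.2 * Real.exp (∑ j, u j p.1 * u j p.2) ∂(ν.prod ν) := by
  set t : X × X → ℝ := fun p => ∑ j, u j p.1 * u j p.2 with ht
  have htc : Continuous t := by fun_prop
  have hlim : Filter.Tendsto (fun n : ℕ => ∫ p : X × X, k p.1 * k p.2 *
      (∑ m ∈ Finset.range n, t p ^ m / m.factorial) ∂(ν.prod ν)) Filter.atTop
      (nhds (∫ p : X × X, k p.1 * k p.2 * Real.exp (t p) ∂(ν.prod ν))) := by
    apply tendsto_integral_of_dominated_convergence
      (fun p => |k p.1 * k p.2| * Real.exp |t p|)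
    · intro n
      exact (by fun_prop : Continuous fun p : X × X => k p.1 * k p.2 *
        (∑ m ∈ Finset.range n, t p ^ m / m.factorial)).aestronglyMeasurable
    · apply cts_integrable
      fun_prop
    · intro n
      refine Filter.Eventually.of_forall fun p => ?_
      rw [Real.norm_eq_abs, abs_mul]
      refine mul_le_mul_of_nonneg_left ?_ (abs_nonneg _)
      calc |∑ m ∈ Finset.range n, t p ^ m / m.factorial|
          ≤ ∑ m ∈ Finset.range n, |t p ^ m / m.factorial| := Finset.abs_sum_le_sum_abs _ _
        _ = ∑ m ∈ Finset.range n, |t p| ^ m / m.factorial := by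
            refine Finset.sum_congr rfl fun m _ => ?_
            rw [abs_div, abs_pow, Nat.abs_cast]
        _ ≤ Real.exp |t p| := Real.sum_le_exp_of_nonneg (abs_nonneg _) n
    · refine Filter.Eventually.of_forall fun p => ?_
      refine Filter.Tendsto.const_mul _ ?_
      have := (NormedSpace.expSeries_div_hasSum_exp (t p)).tendsto_sum_nat
      rwa [← Real.exp_eq_exp_ℝ] at this
  refine ge_of_tendsto' hlim fun n => ?_
  simp_rw [Finset.mul_sum]
  rw [integral_finsetSum]
  · refine Finset.sum_nonneg fun m _ => ?_
    have : ∀ p : X × X, k p.1 * k p.2 * (t p ^ m / m.factorial)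
      = (1 / (m.factorial : ℝ)) * (k p.1 * k p.2 * t p ^ m) := fun p => by ring
    simp_rw [this]
    rw [integral_const_mul]
    exact mul_nonneg (by positivity) (psd_pow ν k hk u hu m)
  · intro m _
    apply cts_integrable
    fun_prop

/-- Gluing three configurations along a reflection. -/
def glue {V S : Type*} [DecidableEq V] (θ : V → V) (A : V → Prop) [DecidablePred A]
    (p : (V → S) × (V → S) × (V → S)) (x : V) : S :=
  if θ x = x then p.1 x else if A x then p.2.1 x else p.2.2 (θ x)

theorem glue_continuous {V S : Type*} [DecidableEq V] [TopologicalSpace S]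
    (θ : V → V) (A : V → Prop) [DecidablePred A] :
    Continuous (glue (S := S) θ A) := by
  refine continuous_pi fun x => ?_
  unfold glue
  split_ifs <;> fun_prop

theorem glue_measurePreserving {V S : Type*} [DecidableEq V] [Fintype V] [MeasurableSpace S]
    (μ : Measure S) [IsProbabilityMeasure μ]
    (θ : V → V) (hθ : Function.Involutive θ) (A : V → Prop) [DecidablePred A]
    (hA : ∀ x, θ x ≠ x → (A (θ x) ↔ ¬ A x)) :
    MeasurePreserving (glue (S := S) θ A)
      ((Measure.pi fun _ : V => μ).prod
        ((Measure.pi fun _ : V => μ).prod (Measure.pi fun _ : V => μ)))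
      (Measure.pi fun _ : V => μ) := by
  have hm : Measurable (glue (S := S) θ A) := by
    refine measurable_pi_lambda _ fun x => ?_
    unfold glue
    split_ifs <;> fun_prop
  refine ⟨hm, (Measure.pi_eq fun s hs => ?_).symm⟩
  rw [Measure.map_apply hm (MeasurableSet.univ_pi hs)]
  have : glue (S := S) θ A ⁻¹' (Set.univ.pi s) =
      (Set.univ.pi fun x => if θ x = x then s x else Set.univ) ×ˢ
      ((Set.univ.pi fun x => if θ x ≠ x ∧ A x then s x else Set.univ) ×ˢ
       (Set.univ.pi fun x => if θ x ≠ x ∧ A x then s (θ x) else Set.univ)) := by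
    ext p
    simp only [Set.mem_preimage, Set.mem_pi, Set.mem_univ, true_imp_iff, Set.mem_prod]
    constructor
    · intro h
      refine ⟨fun x => ?_, fun x => ?_, fun x => ?_⟩
      · have := h x
        unfold glue at this
        split_ifs with h1
        · simpa [h1] using this
        · trivial
      · have := h x
        unfold glue at this
        split_ifs with h1
        · simpa [h1.1, h1.2] using this
        · trivial
      · have := h (θ x)
        unfold glue at this
        split_ifs with h1
        · rw [hθ x] at this
          have h2 : ¬ x = θ x := fun h => h1.1 h.symm
          have h3 : ¬ A (θ x) := by rw [hA x h1.1]; simpa using h1.2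
          simpa [h2, h3] using this
        · trivial
    · rintro ⟨h1, h2, h3⟩ x
      unfold glue
      split_ifs with c1 c2
      · simpa [c1] using h1 x
      · simpa [c1, c2] using h2 x
      · have := h3 (θ x)
        have h4 : ¬ x = θ x := fun h => c1 h.symm
        have h5 : A (θ x) := by rw [hA x c1]; exact c2
        simpa [hθ x, h4, h5] using this
  rw [this, Measure.prod_prod, Measure.prod_prod, Measure.pi_pi, Measure.pi_pi, Measure.pi_pi]
  have e3 : ∏ x, μ (if θ x ≠ x ∧ A x then s (θ x) else Set.univ)
      = ∏ x, μ (if θ x ≠ x ∧ ¬ A x then s x else Set.univ) := by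
    refine Fintype.prod_equiv hθ.toPerm _ _ fun x => ?_
    simp only [Function.Involutive.coe_toPerm, hθ x]
    by_cases h : θ x = x
    · simp [h]
    · have h' : ¬ x = θ x := fun h2 => h h2.symm
      by_cases h2 : A x
      · simp [h, h', hA x h, h2]
      · simp [h, h', hA x h, h2]
  rw [e3, ← Finset.prod_mul_distrib, ← Finset.prod_mul_distrib]
  refine Finset.prod_congr rfl fun x _ => ?_
  by_cases h : θ x = x
  · simp [h]
  · by_cases h2 : A x <;> simp [h, h2]

theorem int_prod_nonneg {X Y : Type*} [TopologicalSpace X] [CompactSpace X] [MeasurableSpace X]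
    [BorelSpace X] [SecondCountableTopology X] [TopologicalSpace Y] [CompactSpace Y]
    [MeasurableSpace Y] [BorelSpace Y] [SecondCountableTopology Y]
    (μ : Measure X) [IsFiniteMeasure μ] (ν : Measure Y) [IsFiniteMeasure ν]
    (f : X × Y → ℝ) (hf : Continuous f) (h : ∀ x, 0 ≤ ∫ y, f (x, y) ∂ν) :
    0 ≤ ∫ p, f p ∂(μ.prod ν) := by
  rw [integral_prod _ (cts_integrable _ hf)]
  exact integral_nonneg h

section RP
set_option linter.unusedSectionVars false
variable {V : Type*} [DecidableEq V] [Fintype V] {N : ℕ}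

/-- Weight of an ordered pair in the energy of the plus half. -/
noncomputable def halfW (θ : V → V) (A : V → Prop) [DecidablePred A] (x y : V) : ℝ :=
  if (A x ∨ θ x = x) ∧ (A y ∨ θ y = y) then
    (if θ x = x ∧ θ y = y then 1 / 2 else 1) else 0

theorem halfW_split (θ : V → V) (hθ : Function.Involutive θ) (A : V → Prop) [DecidablePred A]
    (hA : ∀ x, θ x ≠ x → (A (θ x) ↔ ¬ A x)) (hA0 : ∀ x, A x → θ x ≠ x) (x y : V) :
    halfW θ A x y + halfW θ A (θ x) (θ y) + (if A x ∧ A (θ y) then 1 else 0)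
      + (if A (θ x) ∧ A y then 1 else 0) = 1 := by
  unfold halfW
  rw [hθ x, hθ y]
  by_cases h1 : θ x = x
  · have hx : ¬ A x := fun h => hA0 x h h1
    by_cases h2 : θ y = y
    · have hy : ¬ A y := fun h => hA0 y h h2
      simp [h1, h2, hx, hy]; norm_num
    · have h2' : ¬ y = θ y := fun h => h2 h.symm
      by_cases hy : A y <;> simp [h1, h2, h2', hx, hy, hA y h2]
  · have h1' : ¬ x = θ x := fun h => h1 h.symm
    by_cases h2 : θ y = y
    · have hy : ¬ A y := fun h => hA0 y h h2
      by_cases hx : A x <;> simp [h1, h1', h2, hx, hy, hA x h1]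
    · have h2' : ¬ y = θ y := fun h => h2 h.symm
      by_cases hx : A x <;> by_cases hy : A y <;>
        simp [h1, h1', h2, h2', hx, hy, hA x h1, hA y h2]

/-- Energy of the plus half. -/
noncomputable def halfE (J : V → V → ℝ) (θ : V → V) (A : V → Prop) [DecidablePred A]
    (η : V → SpinSphere N) : ℝ :=
  ∑ x, ∑ y, J x y * halfW θ A x y *
    ⟪(η x : EuclideanSpace ℝ (Fin N)), (η y : EuclideanSpace ℝ (Fin N))⟫

theorem halfE_continuous (J : V → V → ℝ) (θ : V → V) (A : V → Prop) [DecidablePred A] :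
    Continuous (halfE (N := N) J θ A) := by
  unfold halfE
  fun_prop

/-- Merge of the configuration on the fixed set and on the rest. -/
def mergeC {S : Type*} (θ : V → V) (ρ φ : V → S) (x : V) : S := if θ x = x then ρ x else φ x

theorem mergeC_continuous {S : Type*} [TopologicalSpace S] (θ : V → V) :
    Continuous (fun p : (V → S) × (V → S) => mergeC θ p.1 p.2) := by
  refine continuous_pi fun x => ?_
  unfold mergeC
  split_ifs <;> fun_prop

theorem glue_eq_merge1 {S : Type*} (θ : V → V) (A : V → Prop) [DecidablePred A]
    (ρ φ ψ : V → S) (x : V) (hx : A x ∨ θ x = x) :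
    glue θ A (ρ, φ, ψ) x = mergeC θ ρ φ x := by
  unfold glue mergeC
  by_cases h : θ x = x
  · simp [h]
  · have : A x := by tauto
    simp [h, this]

theorem glue_eq_merge2 {S : Type*} (θ : V → V) (hθ : Function.Involutive θ)
    (A : V → Prop) [DecidablePred A]
    (hA : ∀ x, θ x ≠ x → (A (θ x) ↔ ¬ A x))
    (ρ φ ψ : V → S) (x : V) (hx : A x ∨ θ x = x) :
    glue θ A (ρ, φ, ψ) (θ x) = mergeC θ ρ ψ x := by
  unfold glue mergeC
  rw [hθ x]
  by_cases h : θ x = x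
  · simp [h]
  · have h1 : A x := by tauto
    have h2 : ¬ x = θ x := fun h' => h h'.symm
    simp [h, h2, hA x h, h1]

theorem energy_glue (J : V → V → ℝ) (θ : V → V) (hθ : Function.Involutive θ)
    (hJ : ∀ x y, J (θ x) (θ y) = J x y)
    (A : V → Prop) [DecidablePred A]
    (hA : ∀ x, θ x ≠ x → (A (θ x) ↔ ¬ A x)) (hA0 : ∀ x, A x → θ x ≠ x)
    (hcross : ∀ x y, A x → A (θ y) → J x y ≠ 0 → y = θ x)
    (ρ φ ψ : V → SpinSphere N) :
    ∑ x, ∑ y, J x y * ⟪((glue θ A (ρ, φ, ψ) x : SpinSphere N) : EuclideanSpace ℝ (Fin N)),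
        ((glue θ A (ρ, φ, ψ) y : SpinSphere N) : EuclideanSpace ℝ (Fin N))⟫
      = halfE J θ A (mergeC θ ρ φ) + halfE J θ A (mergeC θ ρ ψ)
        + ∑ x, if A x then 2 * J x (θ x) * ⟪(φ x : EuclideanSpace ℝ (Fin N)),
          (ψ x : EuclideanSpace ℝ (Fin N))⟫ else 0 := by
  set g := glue θ A (ρ, φ, ψ) with hg
  set T : V → V → ℝ := fun x y =>
    ⟪(g x : EuclideanSpace ℝ (Fin N)), (g y : EuclideanSpace ℝ (Fin N))⟫ with hT
  have hswap : ∀ F : V → V → ℝ, ∑ x, ∑ y, F (θ x) (θ y) = ∑ x, ∑ y, F x y := by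
    intro F
    refine Fintype.sum_equiv hθ.toPerm _ _ fun x => ?_
    exact Fintype.sum_equiv hθ.toPerm _ _ fun y => rfl
  have e1 : ∑ x, ∑ y, J x y * halfW θ A x y * T x y = halfE J θ A (mergeC θ ρ φ) := by
    unfold halfE
    refine Finset.sum_congr rfl fun x _ => Finset.sum_congr rfl fun y _ => ?_
    by_cases h : (A x ∨ θ x = x) ∧ (A y ∨ θ y = y)
    · simp only [hT, hg]
      rw [glue_eq_merge1 θ A ρ φ ψ x h.1, glue_eq_merge1 θ A ρ φ ψ y h.2]
    · simp [halfW, h]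
  have e2 : ∑ x, ∑ y, J x y * halfW θ A (θ x) (θ y) * T x y
      = halfE J θ A (mergeC θ ρ ψ) := by
    rw [← hswap]
    unfold halfE
    refine Finset.sum_congr rfl fun x _ => Finset.sum_congr rfl fun y _ => ?_
    rw [hθ x, hθ y, hJ]
    by_cases h : (A x ∨ θ x = x) ∧ (A y ∨ θ y = y)
    · simp only [hT, hg]
      rw [glue_eq_merge2 θ hθ A hA ρ φ ψ x h.1, glue_eq_merge2 θ hθ A hA ρ φ ψ y h.2]
    · simp [halfW, h]
  have e3 : ∑ x, ∑ y, J x y * (if A x ∧ A (θ y) then 1 else 0) * T x y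
      = ∑ x, if A x then J x (θ x) * ⟪(φ x : EuclideanSpace ℝ (Fin N)),
          (ψ x : EuclideanSpace ℝ (Fin N))⟫ else 0 := by
    refine Finset.sum_congr rfl fun x _ => ?_
    by_cases h : A x
    · rw [Finset.sum_eq_single (θ x)]
      · simp only [hT, hg, h, hθ x, and_self, if_true]
        rw [glue_eq_merge1 θ A ρ φ ψ x (Or.inl h), glue_eq_merge2 θ hθ A hA ρ φ ψ x (Or.inl h)]
        simp [mergeC, hA0 x h]
      · intro y _ hy
        by_cases h2 : A (θ y)
        · have : J x y = 0 := by
            by_contra h3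
            exact hy (hcross x y h h2 h3)
          simp [this]
        · simp [h2]
      · simp
    · simp [h]
  have e4 : ∑ x, ∑ y, J x y * (if A (θ x) ∧ A y then 1 else 0) * T x y
      = ∑ x, if A x then J x (θ x) * ⟪(φ x : EuclideanSpace ℝ (Fin N)),
          (ψ x : EuclideanSpace ℝ (Fin N))⟫ else 0 := by
    rw [← hswap]
    refine Finset.sum_congr rfl fun x _ => ?_
    simp only [hθ x, hJ]
    by_cases h : A x
    · rw [Finset.sum_eq_single (θ x)]
      · simp only [hT, hg, h, hθ x, and_self, if_true]
        rw [glue_eq_merge1 θ A ρ φ ψ x (Or.inl h), glue_eq_merge2 θ hθ A hA ρ φ ψ x (Or.inl h)]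
        simp [mergeC, hA0 x h, real_inner_comm]
      · intro y _ hy
        by_cases h2 : A (θ y)
        · have : J x y = 0 := by
            by_contra h3
            exact hy (hcross x y h h2 h3)
          simp [this]
        · simp [h2]
      · simp
    · simp [h]
  have e5 : ∑ x, (if A x then 2 * J x (θ x) * ⟪(φ x : EuclideanSpace ℝ (Fin N)),
          (ψ x : EuclideanSpace ℝ (Fin N))⟫ else 0)
      = ∑ x, (if A x then J x (θ x) * ⟪(φ x : EuclideanSpace ℝ (Fin N)),
          (ψ x : EuclideanSpace ℝ (Fin N))⟫ else 0)
        + ∑ x, (if A x then J x (θ x) * ⟪(φ x : EuclideanSpace ℝ (Fin N)),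
          (ψ x : EuclideanSpace ℝ (Fin N))⟫ else 0) := by
    rw [← Finset.sum_add_distrib]
    refine Finset.sum_congr rfl fun x _ => ?_
    split_ifs <;> ring
  rw [e5]
  nth_rewrite 2 [← e4]
  rw [← e3, ← e1, ← e2]
  simp only [← Finset.sum_add_distrib]
  refine Finset.sum_congr rfl fun x _ => Finset.sum_congr rfl fun y _ => ?_
  have := halfW_split θ hθ A hA hA0 x y
  linear_combination (-(J x y * T x y)) * this

theorem rp_abstract (μ : Measure (SpinSphere N)) [IsProbabilityMeasure μ]
    (J : V → V → ℝ) (hJ0 : ∀ x y, 0 ≤ J x y) (θ : V → V) (hθ : Function.Involutive θ)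
    (hJ : ∀ x y, J (θ x) (θ y) = J x y)
    (A : V → Prop) [DecidablePred A]
    (hA : ∀ x, θ x ≠ x → (A (θ x) ↔ ¬ A x)) (hA0 : ∀ x, A x → θ x ≠ x)
    (hcross : ∀ x y, A x → A (θ y) → J x y ≠ 0 → y = θ x)
    (h : (V → SpinSphere N) → ℝ) (hc : Continuous h)
    (hdep : ∀ φ φ', (∀ x, A x ∨ θ x = x → φ x = φ' x) → h φ = h φ') :
    0 ≤ ∫ φ, h φ * h (fun x => φ (θ x)) *
      Real.exp (∑ x, ∑ y, J x y * ⟪(φ x : EuclideanSpace ℝ (Fin N)),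
        (φ y : EuclideanSpace ℝ (Fin N))⟫) ∂(Measure.pi fun _ : V => μ) := by
  have mp := glue_measurePreserving μ θ hθ A hA
  have hcont : Continuous fun φ : V → SpinSphere N => h φ * h (fun x => φ (θ x)) *
      Real.exp (∑ x, ∑ y, J x y * ⟪(φ x : EuclideanSpace ℝ (Fin N)),
        (φ y : EuclideanSpace ℝ (Fin N))⟫) := by fun_prop
  rw [← mp.map_eq, integral_map mp.aemeasurable hcont.aestronglyMeasurable]
  have : IsProbabilityMeasure (Measure.pi fun _ : V => μ) := Measure.pi.instIsProbabilityMeasure _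
  refine int_prod_nonneg _ _ _ (hcont.comp (glue_continuous θ A)) fun ρ => ?_
  let k : (V → SpinSphere N) → ℝ := fun φ =>
    h (mergeC θ ρ φ) * Real.exp (halfE J θ A (mergeC θ ρ φ))
  have hmc : Continuous fun φ : V → SpinSphere N => mergeC θ ρ φ :=
    (mergeC_continuous θ).comp (by fun_prop : Continuous fun φ : V → SpinSphere N => (ρ, φ))
  have hk : Continuous k :=
    (hc.comp hmc).mul (Real.continuous_exp.comp ((halfE_continuous J θ A).comp hmc))
  let u : V × Fin N → (V → SpinSphere N) → ℝ := fun j φ =>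
    if A j.1 then Real.sqrt (2 * J j.1 (θ j.1)) * (φ j.1 : EuclideanSpace ℝ (Fin N)) j.2 else 0
  have hu : ∀ j, Continuous (u j) := by
    intro j
    simp only [u]
    split_ifs <;> fun_prop
  have key := psd_exp (Measure.pi fun _ : V => μ) k hk u hu
  refine le_of_le_of_eq key (integral_congr_ae (Filter.Eventually.of_forall fun p => ?_))
  obtain ⟨φ, ψ⟩ := p
  simp only
  rw [energy_glue J θ hθ hJ A hA hA0 hcross ρ φ ψ,
    hdep (glue θ A (ρ, φ, ψ)) (mergeC θ ρ φ) (fun x hx => glue_eq_merge1 θ A ρ φ ψ x hx),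
    hdep (fun x => glue θ A (ρ, φ, ψ) (θ x)) (mergeC θ ρ ψ)
      (fun x hx => glue_eq_merge2 θ hθ A hA ρ φ ψ x hx), Real.exp_add, Real.exp_add]
  have : ∑ j, u j φ * u j ψ = ∑ x, if A x then 2 * J x (θ x) *
      ⟪(φ x : EuclideanSpace ℝ (Fin N)), (ψ x : EuclideanSpace ℝ (Fin N))⟫ else 0 := by
    rw [Fintype.sum_prod_type]
    refine Finset.sum_congr rfl fun x _ => ?_
    by_cases hx : A x
    · simp only [u, hx, if_true]
      rw [PiLp.inner_apply, Finset.mul_sum]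
      refine Finset.sum_congr rfl fun i _ => ?_
      have := Real.mul_self_sqrt (mul_nonneg zero_le_two (hJ0 x (θ x)))
      simp only [RCLike.inner_apply, conj_trivial]
      linear_combination (φ x : EuclideanSpace ℝ (Fin N)) i *
        (ψ x : EuclideanSpace ℝ (Fin N)) i * this
    · simp [u, hx]
  rw [this]
  simp only [k]
  ring

end RP

instance sphereUniform_prob (N : ℕ) [NeZero N] : IsProbabilityMeasure (sphereUniform N) := by
  constructor
  have hN : Nontrivial (EuclideanSpace ℝ (Fin N)) := by
    have : 0 < Module.finrank ℝ (EuclideanSpace ℝ (Fin N)) := by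
      simpa using Nat.pos_of_ne_zero (NeZero.ne N)
    exact Module.nontrivial_of_finrank_pos this
  unfold sphereUniform
  rw [Measure.smul_apply, smul_eq_mul]
  refine ENNReal.inv_mul_cancel ?_ (measure_ne_top _ _)
  rw [Ne, Measure.measure_univ_eq_zero]
  exact Measure.toSphere_ne_zero _

/-- Action of a linear isometry on the sphere. -/
noncomputable def sphAct {N : ℕ} (e : EuclideanSpace ℝ (Fin N) ≃ₗᵢ[ℝ] EuclideanSpace ℝ (Fin N))
    (s : SpinSphere N) : SpinSphere N :=
  ⟨e s, by simp⟩

theorem sphAct_continuous {N : ℕ}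
    (e : EuclideanSpace ℝ (Fin N) ≃ₗᵢ[ℝ] EuclideanSpace ℝ (Fin N)) :
    Continuous (sphAct e) := by
  unfold sphAct
  exact Continuous.subtype_mk (e.continuous.comp continuous_subtype_val) _

open scoped Pointwise in
theorem sphAct_mp {N : ℕ}
    (e : EuclideanSpace ℝ (Fin N) ≃ₗᵢ[ℝ] EuclideanSpace ℝ (Fin N)) :
    MeasurePreserving (sphAct e) (sphereUniform N) (sphereUniform N) := by
  have hm : Measurable (sphAct e) := (sphAct_continuous e).measurable
  refine ⟨hm, ?_⟩
  ext s hs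
  rw [Measure.map_apply hm hs]
  unfold sphereUniform
  simp only [Measure.smul_apply, smul_eq_mul]
  congr 1
  rw [Measure.toSphere_apply' _ (hm hs), Measure.toSphere_apply' _ hs]
  congr 1
  have : (Set.Ioo (0 : ℝ) 1 • ((↑) '' (sphAct e ⁻¹' s)) : Set (EuclideanSpace ℝ (Fin N)))
      = e ⁻¹' (Set.Ioo (0 : ℝ) 1 • ((↑) '' s)) := by
    ext v
    simp only [Set.mem_smul, Set.mem_preimage, Set.mem_image]
    constructor
    · rintro ⟨r, hr, _, ⟨t, ht, rfl⟩, rfl⟩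
      exact ⟨r, hr, _, ⟨sphAct e t, ht, rfl⟩, by simp [sphAct]⟩
    · rintro ⟨r, hr, _, ⟨t, ht, rfl⟩, h⟩
      refine ⟨r, hr, _, ⟨sphAct e.symm t, ?_, rfl⟩, ?_⟩
      · have : sphAct e (sphAct e.symm t) = t := by
          apply Subtype.ext; simp [sphAct]
        rw [this]; exact ht
      · apply e.injective
        rw [← h]; simp [sphAct]
  rw [this]
  exact e.measurePreserving.measure_preimage_emb e.toHomeomorph.measurableEmbedding _

section Gibbs
set_option linter.unusedSectionVars false
variable {d L N : ℕ} [NeZero L] [NeZero N]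

instance spinMeasure_prob : IsProbabilityMeasure (spinMeasure d L N) := by
  unfold spinMeasure; infer_instance

theorem hamiltonian_continuous : Continuous (hamiltonian (d := d) (L := L) (N := N)) := by
  unfold hamiltonian
  refine continuous_const.mul (continuous_finsetSum _ fun x _ => continuous_finsetSum _ fun y _ => ?_)
  split_ifs <;> fun_prop

theorem weight_continuous (β : ℝ) :
    Continuous fun φ : SpinCfg d L N => Real.exp (-β * hamiltonian φ) :=
  Real.continuous_exp.comp (continuous_const.mul hamiltonian_continuous)

theorem Z_pos (β : ℝ) : 0 < ∫ φ, Real.exp (-β * hamiltonian φ) ∂(spinMeasure d L N) :=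
  integral_exp_pos (cts_integrable _ (weight_continuous β))

theorem gibbs_mono (β : ℝ) {f g : SpinCfg d L N → ℝ} (hf : Continuous f) (hg : Continuous g)
    (h : ∀ φ, f φ ≤ g φ) : gibbsExp d L N β f ≤ gibbsExp d L N β g := by
  unfold gibbsExp
  refine mul_le_mul_of_nonneg_left ?_ (inv_nonneg.2 (Z_pos β).le)
  refine integral_mono (cts_integrable _ (hf.mul (weight_continuous β)))
    (cts_integrable _ (hg.mul (weight_continuous β))) fun φ => ?_
  exact mul_le_mul_of_nonneg_right (h φ) (Real.exp_pos _).le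

theorem gibbs_sum (β : ℝ) {ι : Type*} (s : Finset ι) (c : ι → ℝ) (f : ι → SpinCfg d L N → ℝ)
    (hf : ∀ k, Continuous (f k)) :
    gibbsExp d L N β (fun φ => ∑ k ∈ s, c k * f k φ) = ∑ k ∈ s, c k * gibbsExp d L N β (f k) := by
  unfold gibbsExp
  simp_rw [Finset.sum_mul]
  rw [integral_finsetSum]
  · rw [Finset.mul_sum]
    refine Finset.sum_congr rfl fun k _ => ?_
    simp_rw [mul_assoc]
    rw [integral_const_mul]
    ring
  · intro k _
    exact cts_integrable _ ((continuous_const.mul (hf k)).mul (weight_continuous β))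

theorem gibbs_one (β : ℝ) : gibbsExp d L N β (fun _ => 1) = 1 := by
  unfold gibbsExp
  simp only [one_mul]
  exact inv_mul_cancel₀ (Z_pos β).ne'

theorem gibbs_inv (β : ℝ) (Φ : SpinCfg d L N → SpinCfg d L N)
    (mp : MeasurePreserving Φ (spinMeasure d L N) (spinMeasure d L N))
    (hH : ∀ φ, hamiltonian (Φ φ) = hamiltonian φ) (f : SpinCfg d L N → ℝ) (hf : Continuous f) :
    gibbsExp d L N β (fun φ => f (Φ φ)) = gibbsExp d L N β f := by
  unfold gibbsExp
  congr 1
  conv_rhs => rw [← mp.map_eq]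
  have hc : Continuous fun φ : SpinCfg d L N => f φ * Real.exp (-β * hamiltonian φ) :=
    hf.mul (weight_continuous β)
  rw [integral_map mp.aemeasurable hc.aestronglyMeasurable]
  simp_rw [hH]

theorem perm_mp (σ : Equiv.Perm (TorusPt d L)) :
    MeasurePreserving (fun (φ : SpinCfg d L N) x => φ (σ x))
      (spinMeasure d L N) (spinMeasure d L N) := by
  have hm : Measurable (fun (φ : SpinCfg d L N) x => φ (σ x)) := by fun_prop
  refine ⟨hm, ?_⟩
  unfold spinMeasure
  refine (Measure.pi_eq fun s hs => ?_).symm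
  rw [Measure.map_apply hm (MeasurableSet.univ_pi hs)]
  have : (fun (φ : SpinCfg d L N) x => φ (σ x)) ⁻¹' (Set.univ.pi s)
      = Set.univ.pi fun x => s (σ.symm x) := by
    ext φ
    simp only [Set.mem_preimage, Set.mem_pi, Set.mem_univ, true_imp_iff]
    constructor
    · intro h x; simpa using h (σ.symm x)
    · intro h x; simpa using h (σ x)
  rw [this, Measure.pi_pi]
  exact Fintype.prod_equiv σ.symm _ _ fun x => rfl

theorem corr_perm (β : ℝ) (σ : Equiv.Perm (TorusPt d L))
    (hσ : ∀ x y, torusAdj (σ x) (σ y) ↔ torusAdj x y) (x y : TorusPt d L) :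
    corrOne d L N β (σ x) (σ y) = corrOne d L N β x y := by
  unfold corrOne
  refine gibbs_inv β (fun (φ : SpinCfg d L N) x => φ (σ x)) (perm_mp σ) (fun φ => ?_)
    (fun φ => (φ x : EuclideanSpace ℝ (Fin N)) 0 * (φ y : EuclideanSpace ℝ (Fin N)) 0)
    (by fun_prop)
  unfold hamiltonian
  congr 1
  refine Fintype.sum_equiv σ _ _ fun x => Fintype.sum_equiv σ _ _ fun y => ?_
  simp only [hσ]

theorem corr_self (β : ℝ) (x : TorusPt d L) : corrOne d L N β x x = 1 / (N : ℝ) := by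
  have h1 : ∀ j : Fin N, gibbsExp d L N β (fun φ => (φ x : EuclideanSpace ℝ (Fin N)) j *
      (φ x : EuclideanSpace ℝ (Fin N)) j) = corrOne d L N β x x := by
    intro j
    let e : EuclideanSpace ℝ (Fin N) ≃ₗᵢ[ℝ] EuclideanSpace ℝ (Fin N) :=
      LinearIsometryEquiv.piLpCongrLeft 2 ℝ ℝ (Equiv.swap 0 j)
    have he : ∀ v : EuclideanSpace ℝ (Fin N), e v 0 = v j := by
      intro v
      simp [e, LinearIsometryEquiv.piLpCongrLeft_apply, Equiv.piCongrLeft'_apply]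
    have := gibbs_inv β (fun (φ : SpinCfg d L N) x => sphAct e (φ x))
      (by
        unfold spinMeasure
        exact measurePreserving_pi _ _ fun _ => sphAct_mp e)
      (fun φ => by
        unfold hamiltonian
        simp only [sphAct, LinearIsometryEquiv.inner_map_map])
      (fun φ => (φ x : EuclideanSpace ℝ (Fin N)) 0 * (φ x : EuclideanSpace ℝ (Fin N)) 0)
      (by fun_prop)
    unfold corrOne
    rw [← this]
    simp only [sphAct, he]
  have h2 := gibbs_sum (d := d) (L := L) (N := N) β Finset.univ (fun _ : Fin N => (1 : ℝ))
    (fun j φ => (φ x : EuclideanSpace ℝ (Fin N)) j * (φ x : EuclideanSpace ℝ (Fin N)) j)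
    (fun j => by fun_prop)
  simp only [one_mul, h1, Finset.sum_const, Finset.card_univ, Fintype.card_fin, nsmul_eq_mul] at h2
  have h3 : (fun φ : SpinCfg d L N => ∑ j, (φ x : EuclideanSpace ℝ (Fin N)) j *
      (φ x : EuclideanSpace ℝ (Fin N)) j) = fun _ => 1 := by
    funext φ
    have h4 : ‖(φ x : EuclideanSpace ℝ (Fin N))‖ = 1 := by simp
    have h5 := EuclideanSpace.real_norm_sq_eq (φ x : EuclideanSpace ℝ (Fin N))
    rw [h4] at h5
    simp only [← sq]
    rw [← h5]; norm_num
  rw [h3, gibbs_one] at h2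
  have : (N : ℝ) ≠ 0 := by exact_mod_cast NeZero.ne N
  field_simp
  linarith

theorem corr_le (β : ℝ) (x y : TorusPt d L) : corrOne d L N β x y ≤ 1 / (N : ℝ) := by
  have h2 := gibbs_sum (d := d) (L := L) (N := N) β Finset.univ (fun _ : Fin 2 => (1 / 2 : ℝ))
    (fun j φ => ![(φ x : EuclideanSpace ℝ (Fin N)) 0 * (φ x : EuclideanSpace ℝ (Fin N)) 0,
       (φ y : EuclideanSpace ℝ (Fin N)) 0 * (φ y : EuclideanSpace ℝ (Fin N)) 0] j)
    (fun j => by fin_cases j <;> simp <;> fun_prop)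
  simp only [Fin.sum_univ_two, Matrix.cons_val_zero, Matrix.cons_val_one] at h2
  have hx := corr_self (N := N) β x
  have hy := corr_self (N := N) β y
  unfold corrOne at hx hy
  rw [hx, hy] at h2
  have h3 : 1 / (N : ℝ) = 1 / 2 * (1 / N) + 1 / 2 * (1 / N) := by ring
  rw [h3, ← h2]
  unfold corrOne
  refine gibbs_mono β (by fun_prop) (by fun_prop) fun φ => ?_
  nlinarith [sq_nonneg ((φ x : EuclideanSpace ℝ (Fin N)) 0 - (φ y : EuclideanSpace ℝ (Fin N)) 0)]

end Gibbs

section Torus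
variable {d L N : ℕ} [NeZero L] [NeZero N]
set_option linter.unusedSectionVars false

/-- Signed translation of the torus. -/
def affT (s v : TorusPt d L) (x : TorusPt d L) : TorusPt d L := fun j => s j * x j + v j

theorem affT_adj (s v : TorusPt d L) (hs : ∀ j, s j = 1 ∨ s j = -1) (x y : TorusPt d L)
    (h : torusAdj x y) : torusAdj (affT s v x) (affT s v y) := by
  obtain ⟨j, h⟩ := h
  refine ⟨j, ?_⟩
  have key : ∀ c : ZMod L, affT s v (Function.update x j (x j + c))
      = Function.update (affT s v x) j (affT s v x j + s j * c) := by
    intro c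
    funext k
    by_cases hk : k = j
    · subst hk; simp [affT]; ring
    · simp [affT, hk]
  rcases h with h | h
  · rw [h, key 1]
    rcases hs j with h' | h' <;> rw [h']
    · left; simp
    · right; congr 1; ring
  · rw [h, sub_eq_add_neg, key (-1)]
    rcases hs j with h' | h' <;> rw [h']
    · right; congr 1; ring
    · left; congr 1; ring

/-- Signed translation as a permutation. -/
def affP (s v : TorusPt d L) (hs : ∀ j, s j = 1 ∨ s j = -1) : Equiv.Perm (TorusPt d L) where
  toFun := affT s v
  invFun := affT s (fun j => -(s j * v j))
  left_inv x := by
    funext j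
    simp only [affT]
    rcases hs j with h | h <;> rw [h] <;> ring
  right_inv x := by
    funext j
    simp only [affT]
    rcases hs j with h | h <;> rw [h] <;> ring

theorem affP_adj (s v : TorusPt d L) (hs : ∀ j, s j = 1 ∨ s j = -1) (x y : TorusPt d L) :
    torusAdj (affP s v hs x) (affP s v hs y) ↔ torusAdj x y := by
  constructor
  · intro h
    have := affT_adj s (fun j => -(s j * v j)) hs _ _ h
    have e : ∀ x, affT s (fun j => -(s j * v j)) (affP s v hs x) = x := (affP s v hs).left_inv
    rwa [e, e] at this
  · exact affT_adj s v hs x y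

theorem corr_aff (β : ℝ) (s v : TorusPt d L) (hs : ∀ j, s j = 1 ∨ s j = -1) (x y : TorusPt d L) :
    corrOne d L N β (affT s v x) (affT s v y) = corrOne d L N β x y :=
  corr_perm β (affP s v hs) (affP_adj s v hs) x y

theorem corr_trans (β : ℝ) (x y : TorusPt d L) :
    corrOne d L N β x y = corrOne d L N β (torusOrigin d L) (y - x) := by
  rw [← corr_aff β (fun _ => 1) (-x) (fun _ => Or.inl rfl) x y]
  congr 1 <;> funext j <;> simp [affT, torusOrigin] <;> ring

theorem corr_neg (β : ℝ) (x : TorusPt d L) :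
    corrOne d L N β (torusOrigin d L) (-x) = corrOne d L N β (torusOrigin d L) x := by
  rw [← corr_aff β (fun _ => -1) 0 (fun _ => Or.inr rfl) (torusOrigin d L) x]
  congr 1 <;> funext j <;> simp [affT, torusOrigin]

theorem corr_refl (β : ℝ) (w : TorusPt d L) (i : Fin d) (a : ZMod L) :
    corrOne d L N β (torusOrigin d L) (Function.update w i (-a))
      = corrOne d L N β (torusOrigin d L) (Function.update w i a) := by
  rw [← corr_aff β (Function.update (fun _ => 1) i (-1)) 0 ?_ (torusOrigin d L)
    (Function.update w i a)]
  · congr 1 <;> funext j <;> by_cases h : j = i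
    · subst h; simp [affT, torusOrigin]
    · simp [affT, torusOrigin]
    · subst h; simp [affT]
    · simp [affT, h]
  · intro j
    by_cases h : j = i
    · subst h; simp
    · simp [h]

theorem corr_upd_neg (β : ℝ) (w : TorusPt d L) (i : Fin d) (a : ZMod L) :
    corrOne d L N β (torusOrigin d L) (Function.update (-w) i a)
      = corrOne d L N β (torusOrigin d L) (Function.update w i a) := by
  rw [← corr_refl, ← corr_neg]
  congr 1
  funext j
  by_cases h : j = i
  · subst h; simp
  · simp [h]

/-- The reflection `x_i ↦ -x_i - e`. -/
def thT (i : Fin d) (e : ℕ) (x : TorusPt d L) : TorusPt d L :=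
  Function.update x i (-(x i) - (e : ZMod L))

theorem thT_eq_aff (i : Fin d) (e : ℕ) (x : TorusPt d L) :
    thT i e x = affT (Function.update (fun _ => 1) i (-1))
      (Function.update (fun _ => 0) i (-(e : ZMod L))) x := by
  funext j
  by_cases h : j = i
  · subst h; simp [thT, affT]; ring
  · simp [thT, affT, h]

theorem thT_adj (i : Fin d) (e : ℕ) (x y : TorusPt d L) :
    torusAdj (thT i e x) (thT i e y) ↔ torusAdj x y := by
  rw [thT_eq_aff, thT_eq_aff]
  refine affP_adj _ _ ?_ x y
  intro j
  by_cases h : j = i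
  · subst h; simp
  · simp [h]

theorem thT_inv (i : Fin d) (e : ℕ) : Function.Involutive (thT (L := L) i e) := by
  intro x
  unfold thT
  simp

theorem thT_self (i : Fin d) (e : ℕ) (x : TorusPt d L) :
    thT i e x i = -(x i) - (e : ZMod L) := by simp [thT]

theorem thT_fix (i : Fin d) (e : ℕ) (x : TorusPt d L) :
    thT i e x = x ↔ (thT i e x i).val = (x i).val := by
  constructor
  · intro h; rw [h]
  · intro h
    have := ZMod.val_injective L h
    rw [thT_self] at this
    unfold thT
    rw [this]; simp

theorem val_refl (x : ZMod L) (e : ℕ) (he : e ≤ 1) :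
    (-x - (e : ZMod L)).val = if x.val + e = 0 then 0 else L - x.val - e := by
  have hx := ZMod.val_lt x
  split_ifs with h
  · have h1 : x.val = 0 := by omega
    have h2 : e = 0 := by omega
    rw [ZMod.val_eq_zero] at h1
    simp [h1, h2]
  · have : -x - (e : ZMod L) = ((L - x.val - e : ℕ) : ZMod L) := by
      rw [Nat.cast_sub (by omega), Nat.cast_sub (by omega)]
      simp
    rw [this, ZMod.val_natCast_of_lt (by omega)]

theorem val_succ (x : ZMod L) :
    (x + 1).val = if x.val + 1 = L then 0 else x.val + 1 := by
  have hx := ZMod.val_lt x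
  have : x + 1 = ((x.val + 1 : ℕ) : ZMod L) := by simp
  rw [this]
  split_ifs with h
  · rw [h]; simp
  · rw [ZMod.val_natCast_of_lt (by omega)]

theorem val_pred (x : ZMod L) :
    (x - 1).val = if x.val = 0 then L - 1 else x.val - 1 := by
  have hx := ZMod.val_lt x
  split_ifs with h
  · rw [ZMod.val_eq_zero] at h
    have : x - 1 = ((L - 1 : ℕ) : ZMod L) := by
      rw [Nat.cast_sub (by omega)]; simp [h]
    rw [this, ZMod.val_natCast_of_lt (by omega)]
  · have : x - 1 = ((x.val - 1 : ℕ) : ZMod L) := by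
      rw [Nat.cast_sub (by omega)]; simp
    rw [this, ZMod.val_natCast_of_lt (by omega)]

theorem cross_lem (hL : Even L) (i : Fin d) (e : ℕ) (he : e ≤ 1) (x y : TorusPt d L)
    (hx : (x i).val < (thT i e x i).val) (hy : (thT i e y i).val < (y i).val)
    (hxy : torusAdj x y) : y = thT i e x := by
  rw [thT_self, val_refl _ _ he] at hx hy
  have hx0 := ZMod.val_lt (x i)
  have hy0 := ZMod.val_lt (y i)
  obtain ⟨j, h⟩ := hxy
  obtain ⟨l, hl⟩ := hL
  by_cases hj : j = i
  · subst hj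
    have hv : ∀ c : ZMod L, y = Function.update x j c → (c.val = (-(x j) - (e : ZMod L)).val) →
        y = thT j e x := by
      intro c h1 h2
      rw [h1, ZMod.val_injective L h2]
      rfl
    rcases h with h | h
    · refine hv _ h ?_
      have h1 : (y j).val = (x j + 1).val := by rw [h]; simp
      rw [val_succ] at h1 ⊢
      rw [val_refl _ _ he]
      split_ifs at * <;> omega
    · refine hv _ h ?_
      have h1 : (y j).val = (x j - 1).val := by rw [h]; simp
      rw [val_pred] at h1 ⊢
      rw [val_refl _ _ he]
      split_ifs at * <;> omega
  · have : y i = x i := by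
      rcases h with h | h <;> rw [h] <;> simp [Ne.symm hj]
    rw [this] at hy
    split_ifs at * <;> omega

theorem rp_corr (hL : Even L) (β : ℝ) (hβ : 0 ≤ β) (i : Fin d) (e : ℕ) (he : e ≤ 1) {m : ℕ}
    (P : Fin m → TorusPt d L) (c : Fin m → ℝ)
    (hP : ∀ k, (P k i).val ≤ (thT i e (P k) i).val) :
    0 ≤ ∑ k, ∑ l, c k * c l * corrOne d L N β (P k) (thT i e (P l)) := by
  have key := rp_abstract (V := TorusPt d L) (sphereUniform N)
    (fun x y => if torusAdj x y then β / 2 else 0)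
    (fun x y => by split_ifs <;> positivity)
    (thT i e) (thT_inv i e)
    (fun x y => by simp only [thT_adj])
    (fun x => (x i).val < (thT i e x i).val)
    (fun x hx => by
      rw [Ne, thT_fix] at hx
      rw [thT_inv i e x]
      omega)
    (fun x hx => by
      rw [Ne, thT_fix]
      omega)
    (fun x y hx hy hxy => by
      rw [thT_inv i e y] at hy
      refine cross_lem hL i e he x y hx hy ?_
      by_contra h
      simp [h] at hxy)
    (fun φ => ∑ k, c k * (φ (P k) : EuclideanSpace ℝ (Fin N)) 0)
    (by fun_prop)
    (fun φ φ' h => by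
      refine Finset.sum_congr rfl fun k _ => ?_
      rw [h (P k)]
      rw [thT_fix]
      have := hP k
      omega)
  have e1 : ∑ k, ∑ l, c k * c l * corrOne d L N β (P k) (thT i e (P l))
      = gibbsExp d L N β (fun φ => (∑ k, c k * (φ (P k) : EuclideanSpace ℝ (Fin N)) 0) *
        (∑ k, c k * (φ (thT i e (P k)) : EuclideanSpace ℝ (Fin N)) 0)) := by
    have := gibbs_sum (d := d) (L := L) (N := N) β Finset.univ
      (fun p : Fin m × Fin m => c p.1 * c p.2)
      (fun p φ => (φ (P p.1) : EuclideanSpace ℝ (Fin N)) 0 *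
        (φ (thT i e (P p.2)) : EuclideanSpace ℝ (Fin N)) 0)
      (fun p => by fun_prop)
    simp only [Fintype.sum_prod_type] at this
    unfold corrOne
    rw [← this]
    congr 1
    funext φ
    rw [Finset.sum_mul_sum]
    refine Finset.sum_congr rfl fun k _ => Finset.sum_congr rfl fun l _ => ?_
    ring
  rw [e1]
  unfold gibbsExp
  refine mul_nonneg (inv_nonneg.2 (Z_pos β).le) (le_of_le_of_eq key ?_)
  unfold spinMeasure
  refine integral_congr_ae (Filter.Eventually.of_forall fun φ => ?_)
  dsimp only
  congr 2
  unfold hamiltonian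
  have : ∀ r : ℝ, -β * (-(1 / 2) * r) = β / 2 * r := fun r => by ring
  rw [this]
  simp only [Finset.mul_sum]
  refine Finset.sum_congr rfl fun x _ => Finset.sum_congr rfl fun y _ => ?_
  split_ifs <;> simp

theorem corr_pair (β : ℝ) (i : Fin d) (e : ℕ) (w1 w2 : TorusPt d L) (a b : ZMod L) :
    corrOne d L N β (Function.update w1 i a) (thT i e (Function.update w2 i b))
      = corrOne d L N β (torusOrigin d L) (Function.update (w2 - w1) i (a + b + e)) := by
  rw [corr_trans, ← corr_refl]
  congr 1
  funext j
  by_cases h : j = i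
  · subst h; simp [thT]; ring
  · simp [thT, h]

theorem half_cond (hL : Even L) (i : Fin d) (e a : ℕ) (he : e ≤ 1) (ha : 2 * a + e ≤ L)
    (w : TorusPt d L) :
    (Function.update w i (a : ZMod L) i).val
      ≤ (thT i e (Function.update w i (a : ZMod L)) i).val := by
  have hL0 := NeZero.ne L
  obtain ⟨l, hl⟩ := hL
  rw [thT_self, val_refl _ _ he]
  simp only [Function.update_self]
  rw [ZMod.val_natCast_of_lt (by omega)]
  split_ifs <;> omega

theorem schwarz_ineq (hL : Even L) (β : ℝ) (hβ : 0 ≤ β) (i : Fin d) (w : TorusPt d L)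
    (n : ℕ) (hn : n ≤ L) :
    corrOne d L N β (torusOrigin d L) (Function.update w i (n : ZMod L))
      ≤ corrOne d L N β (torusOrigin d L) (Function.update 0 i (n : ZMod L)) := by
  obtain ⟨a, e, he, hae⟩ : ∃ a e : ℕ, e ≤ 1 ∧ n = a + a + e :=
    ⟨n / 2, n % 2, by omega, by omega⟩
  have h := rp_corr (N := N) hL β hβ i e he
    (![Function.update 0 i (a : ZMod L), Function.update w i (a : ZMod L)]) ![1, -1]
    (fun k => by
      fin_cases k <;> exact half_cond hL i e a he (by omega) _)
  simp only [Fin.sum_univ_two, Matrix.cons_val_zero, Matrix.cons_val_one, corr_pair,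
    sub_self, zero_sub, sub_zero, corr_upd_neg] at h
  have : (n : ZMod L) = a + a + e := by rw [hae]; push_cast; ring
  rw [this]
  linarith

theorem convex_ineq (hL : Even L) (β : ℝ) (hβ : 0 ≤ β) (i : Fin d) (w : TorusPt d L)
    (F : ℕ → ℝ) (hF : ∀ n, F n = corrOne d L N β (torusOrigin d L) (Function.update 0 i (n : ZMod L))
      + corrOne d L N β (torusOrigin d L) (Function.update w i (n : ZMod L)))
    (n : ℕ) (hn : n + 2 ≤ L) :
    2 * F (n + 1) ≤ F n + F (n + 2) := by
  obtain ⟨a, e, he, hae⟩ : ∃ a e : ℕ, e ≤ 1 ∧ n = a + a + e :=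
    ⟨n / 2, n % 2, by omega, by omega⟩
  have h := rp_corr (N := N) hL β hβ i e he
    (![Function.update 0 i (a : ZMod L), Function.update w i (a : ZMod L),
      Function.update 0 i ((a + 1 : ℕ) : ZMod L), Function.update w i ((a + 1 : ℕ) : ZMod L)])
    ![1, 1, -1, -1]
    (fun k => by
      fin_cases k
      · exact half_cond hL i e a he (by omega) _
      · exact half_cond hL i e a he (by omega) _
      · exact half_cond hL i e (a + 1) he (by omega) _
      · exact half_cond hL i e (a + 1) he (by omega) _)
  simp only [Fin.sum_univ_four, Matrix.cons_val, corr_pair,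
    sub_self, zero_sub, sub_zero, corr_upd_neg] at h
  have e0 : (n : ZMod L) = a + a + e := by rw [hae]; push_cast; ring
  have e1 : ((n + 1 : ℕ) : ZMod L) = a + ((a + 1 : ℕ) : ZMod L) + e := by rw [hae]; push_cast; ring
  have e1' : ((a + 1 : ℕ) : ZMod L) + a + e = a + ((a + 1 : ℕ) : ZMod L) + e := by ring
  have e2 : ((n + 2 : ℕ) : ZMod L) = ((a + 1 : ℕ) : ZMod L) + ((a + 1 : ℕ) : ZMod L) + e := by
    rw [hae]; push_cast; ring
  rw [hF, hF, hF, e0, e1, e2]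
  rw [e1'] at h
  linarith

theorem convex_mono (F : ℕ → ℝ) (L : ℕ) (hsym : ∀ n, n ≤ L → F (L - n) = F n)
    (hconv : ∀ n, n + 2 ≤ L → 2 * F (n + 1) ≤ F n + F (n + 2)) (m n : ℕ) (hnm : n ≤ m)
    (hm : 2 * m ≤ L) : F m ≤ F n := by
  have hD : ∀ a b, a ≤ b → b + 1 ≤ L → F (a + 1) - F a ≤ F (b + 1) - F b := by
    intro a b hab
    induction b, hab using Nat.le_induction with
    | base => intro _; exact le_rfl
    | succ b _ ih =>
      intro hb
      have h1 := ih (by omega)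
      have h2 := hconv b (by omega)
      have : b + 1 + 1 = b + 2 := rfl
      rw [this]
      linarith
  have hstep : ∀ k, 2 * (k + 1) ≤ L → F (k + 1) ≤ F k := by
    intro k hk
    have h1 := hD k (L - (k + 1)) (by omega) (by omega)
    have h2 : L - (k + 1) + 1 = L - k := by omega
    rw [h2, hsym k (by omega), hsym (k + 1) (by omega)] at h1
    linarith
  induction m, hnm using Nat.le_induction with
  | base => exact le_rfl
  | succ k _ ih => exact (hstep k hm).trans (ih (by omega))

theorem corr_hat (β : ℝ) (w : TorusPt d L) (i : Fin d) (a : ZMod L) :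
    corrOne d L N β (torusOrigin d L) (Function.update w i a)
      = corrOne d L N β (torusOrigin d L)
        (Function.update w i ((min a.val (L - a.val) : ℕ) : ZMod L)) := by
  rcases le_total a.val (L - a.val) with h | h
  · rw [min_eq_left h]; simp
  · rw [min_eq_right h, Nat.cast_sub (ZMod.val_lt a).le]
    simp only [CharP.cast_eq_zero, ZMod.natCast_val, ZMod.cast_id', id_eq, zero_sub]
    rw [corr_refl]

theorem step_ineq (hL : Even L) (β : ℝ) (hβ : 0 ≤ β) (i : Fin d) (w : TorusPt d L)
    (a : ZMod L) (ha : min a.val (L - a.val) ≤ hatCoord w i) :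
    1 / (N : ℝ) - corrOne d L N β (torusOrigin d L) (Function.update w i a)
      ≤ 2 * (1 / (N : ℝ) - corrOne d L N β (torusOrigin d L) w) := by
  have hw : corrOne d L N β (torusOrigin d L) w = corrOne d L N β (torusOrigin d L)
      (Function.update w i ((hatCoord w i : ℕ) : ZMod L)) := by
    conv_lhs => rw [← Function.update_eq_self i w, corr_hat]
    rfl
  rw [corr_hat β w i a, hw]
  set n := min a.val (L - a.val)
  set m := hatCoord w i with hm
  have hm2 : 2 * m ≤ L := by
    simp only [hm, hatCoord]; omega
  let F : ℕ → ℝ := fun n =>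
    corrOne d L N β (torusOrigin d L) (Function.update 0 i (n : ZMod L))
      + corrOne d L N β (torusOrigin d L) (Function.update w i (n : ZMod L))
  have hmono := convex_mono F L (fun n hn => by
      simp only [F]
      rw [Nat.cast_sub hn]
      simp only [CharP.cast_eq_zero, zero_sub, corr_refl])
    (convex_ineq hL β hβ i w F (fun _ => rfl)) m n ha hm2
  simp only [F] at hmono
  have h1 := schwarz_ineq (N := N) hL β hβ i w m (by omega)
  have h2 := corr_le (N := N) β (torusOrigin d L) (Function.update 0 i (n : ZMod L))
  linarith

end Torus

/-- **Propagation of a lower bound inside the box `Q_z` (points of `H_L`).**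
Let `δ > 0` and `z ∈ T_L ∩ H_L` with `‖z‖_∞ ≤ L/2`. If `⟨φ_o^1 φ_z^1⟩ ≥ 1/N - δ`, then
`⟨φ_o^1 φ_y^1⟩ ≥ 1/N - 2^d δ` for every `y ∈ Q_z ∩ H_L`. -/
theorem spin_lower_bound_in_box_HL
    (d L N : ℕ) [NeZero L] [NeZero N] (hd : 2 ≤ d) (hL : Even L)
    (β : ℝ) (hβ : 0 ≤ β) (δ : ℝ) (hδ : 0 < δ)
    (z : TorusPt d L) (hzH : inHL z) (hznorm : 2 * tnormInf z ≤ L)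
    (hz : 1 / (N : ℝ) - δ ≤ corrOne d L N β (torusOrigin d L) z) :
    ∀ y : TorusPt d L, inBoxQ z y → inHL y →
      1 / (N : ℝ) - 2 ^ d * δ ≤ corrOne d L N β (torusOrigin d L) y := by
  intro y hy _
  have key : ∀ S : Finset (Fin d), 1 / (N : ℝ) -
      corrOne d L N β (torusOrigin d L) (fun j => if j ∈ S then y j else z j)
        ≤ 2 ^ S.card * δ := by
    intro S
    induction S using Finset.induction_on with
    | empty => simp at hz ⊢; linarith
    | insert i S hi ih =>
      have h := step_ineq (N := N) hL β hβ i (fun j => if j ∈ S then y j else z j) (y i) (by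
        have h1 := hy i
        have h2 : hatCoord (fun j => if j ∈ S then y j else z j) i = hatCoord z i := by
          simp [hatCoord, hi]
        rw [h2]
        rcases h1 with h1 | h1
        · exact (min_le_left _ _).trans h1
        · refine (min_le_right _ _).trans ?_
          omega)
      have e : Function.update (fun j => if j ∈ S then y j else z j) i (y i)
          = fun j => if j ∈ insert i S then y j else z j := by
        funext j
        by_cases hj : j = i
        · subst hj; simp
        · simp [hj]
      rw [e] at h
      rw [Finset.card_insert_of_notMem hi, pow_succ]
      linarith
  have := key Finset.univ
  simp only [Finset.mem_univ, if_true, Finset.card_univ, Fintype.card_fin] at this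
  linarith
end

section
/- Let δ > 0 and let z ∈ T_L ∩ H_L with ‖z‖_∞ ≤ L/2. If ⟨φ_o^1 φ_z^1⟩_{L,N,β} ≥ 1/N − δ, then for every x ∈ Q_z ∖ H_L one has ⟨φ_o^1 φ_x^1⟩_{L,N,β} ≥ (1/N − 2^d δ) · (β e^{−2dβ} / N)^{d−2}. -/
open MeasureTheory Metric
open scoped RealInnerProductSpace BigOperators

set_option linter.unusedSectionVars false

namespace SpinAux

section General

variable {ι : Type*} [Fintype ι] {X : Type*} [MeasurableSpace X]

lemma cont_integrable {Ω : Type*} [TopologicalSpace Ω] [CompactSpace Ω] [MeasurableSpace Ω]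
    [BorelSpace Ω] (μ : Measure Ω) [IsFiniteMeasure μ] {h : Ω → ℝ} (hh : Continuous h) :
    Integrable h μ :=
  hh.integrable_of_hasCompactSupport (HasCompactSupport.of_compactSpace h)

/-- If all moments are nonnegative, so is the exponential integral. -/
lemma integral_mul_exp_nonneg {Ω : Type*} [TopologicalSpace Ω] [CompactSpace Ω]
    [MeasurableSpace Ω] [BorelSpace Ω] (μ : Measure Ω) [IsFiniteMeasure μ] (h t : Ω → ℝ)
    (hh : Continuous h) (ht : Continuous t) (H : ∀ k : ℕ, 0 ≤ ∫ a, h a * t a ^ k ∂μ) :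
    0 ≤ ∫ a, h a * Real.exp (t a) ∂μ := by
  obtain ⟨C, hC⟩ := (isCompact_range hh).isBounded.exists_norm_le
  obtain ⟨T, hT⟩ := (isCompact_range ht).isBounded.exists_norm_le
  have key := hasSum_integral_of_dominated_convergence (μ := μ)
    (F := fun (k : ℕ) a => h a * (t a ^ k / k.factorial)) (f := fun a => h a * Real.exp (t a))
    (fun k _ => C * (T ^ k / k.factorial))
    (fun k => (Continuous.aestronglyMeasurable (by fun_prop)))
    (fun k => Filter.Eventually.of_forall fun a => ?_)
    (Filter.Eventually.of_forall fun a => (Real.summable_pow_div_factorial T).mul_left C)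
    (integrable_const _)
    (Filter.Eventually.of_forall fun a => ?_)
  · refine key.nonneg fun k => ?_
    have := H k
    have e : ∫ a, h a * (t a ^ k / k.factorial) ∂μ = (∫ a, h a * t a ^ k ∂μ) / k.factorial := by
      rw [← integral_div]; congr 1; ext a; ring
    rw [e]; positivity
  · have h1 := hC (h a) ⟨a, rfl⟩
    have h2 := hT (t a) ⟨a, rfl⟩
    rw [norm_mul, norm_div, norm_pow]
    simp only [Real.norm_natCast]
    have h3 : 0 ≤ C := (norm_nonneg _).trans h1
    gcongr
  · have := NormedSpace.expSeries_div_hasSum_exp (𝔸 := ℝ) (t a)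
    rw [← Real.exp_eq_exp_ℝ] at this
    exact this.mul_left (h a)

/-- Gluing three independent copies along a reflection preserves the product measure. -/
lemma glue_measurePreserving (ν : Measure X) [IsProbabilityMeasure ν] (θ : ι ≃ ι)
    (P : ι → Prop) [DecidablePred P] (hθ : ∀ x, θ (θ x) = x) (hcov : ∀ x, P x ∨ P (θ x)) :
    MeasurePreserving
      (fun (q : (ι → X) × (ι → X) × (ι → X)) (x : ι) =>
        if P x then (if P (θ x) then q.1 x else q.2.1 x) else q.2.2 (θ x))
      ((Measure.pi fun _ : ι => ν).prod ((Measure.pi fun _ : ι => ν).prod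
        (Measure.pi fun _ : ι => ν))) (Measure.pi fun _ : ι => ν) := by
  have hm : Measurable (fun (q : (ι → X) × (ι → X) × (ι → X)) (x : ι) =>
        if P x then (if P (θ x) then q.1 x else q.2.1 x) else q.2.2 (θ x)) := by
    refine measurable_pi_lambda _ fun x => ?_
    split_ifs <;> fun_prop
  refine ⟨hm, ?_⟩
  symm
  refine Measure.pi_eq fun s hs => ?_
  rw [Measure.map_apply hm (MeasurableSet.univ_pi hs)]
  have hset : (fun (q : (ι → X) × (ι → X) × (ι → X)) (x : ι) =>
        if P x then (if P (θ x) then q.1 x else q.2.1 x) else q.2.2 (θ x)) ⁻¹' (Set.univ.pi s)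
      = (Set.univ.pi fun x => if P x ∧ P (θ x) then s x else Set.univ) ×ˢ
        ((Set.univ.pi fun x => if P x ∧ ¬ P (θ x) then s x else Set.univ) ×ˢ
         (Set.univ.pi fun x => if ¬ P (θ x) then s (θ x) else Set.univ)) := by
    ext ⟨a, b, c⟩
    simp only [Set.mem_preimage, Set.mem_pi, Set.mem_univ, true_implies, Set.mem_prod]
    constructor
    · intro h
      refine ⟨fun x => ?_, fun x => ?_, fun x => ?_⟩
      · split_ifs with h1
        · simpa [h1] using h x
        · trivial
      · split_ifs with h1
        · simpa [h1] using h x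
        · trivial
      · split_ifs with h1
        · trivial
        · simpa [h1, hθ] using h (θ x)
    · rintro ⟨h1, h2, h3⟩ x
      have h1 := h1 x
      have h2 := h2 x
      have h3 := h3 (θ x)
      by_cases hP : P x <;> by_cases hQ : P (θ x) <;> simp_all
  rw [hset, Measure.prod_prod, Measure.prod_prod, Measure.pi_pi, Measure.pi_pi, Measure.pi_pi,
    ← Equiv.prod_comp θ (fun x => ν (if ¬ P (θ x) then s (θ x) else Set.univ)),
    ← Finset.prod_mul_distrib, ← Finset.prod_mul_distrib]
  refine Finset.prod_congr rfl fun x _ => ?_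
  have := hcov x
  by_cases hP : P x <;> by_cases hQ : P (θ x) <;> simp_all

/-- Core of reflection positivity. -/
lemma core_rp [TopologicalSpace X] [CompactSpace X] [SecondCountableTopology X] [BorelSpace X]
    (ν : Measure X) [IsProbabilityMeasure ν] (θ : ι ≃ ι)
    (P : ι → Prop) [DecidablePred P] (hθ : ∀ x, θ (θ x) = x) (hcov : ∀ x, P x ∨ P (θ x))
    (hfix : ∀ x, P x → P (θ x) → θ x = x)
    (h : (ι → X) → ℝ) (hh : Continuous h)
    (hdep : ∀ φ ψ : ι → X, (∀ x, P x → φ x = ψ x) → h φ = h ψ) :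
    0 ≤ ∫ φ, h φ * h (fun x => φ (θ x)) ∂(Measure.pi fun _ : ι => ν) := by
  set μ := Measure.pi fun _ : ι => ν with hμ
  have mp := glue_measurePreserving ν θ P hθ hcov
  rw [← hμ] at mp
  have hmeas : StronglyMeasurable (fun φ : ι → X => h φ * h (fun x => φ (θ x))) :=
    Continuous.stronglyMeasurable (by fun_prop)
  rw [← mp.map_eq, integral_map mp.measurable.aemeasurable hmeas.aestronglyMeasurable]
  have hc : ∀ ξ : ι → X, Continuous fun ψ : ι → X =>
      h (fun x => if P (θ x) then ξ x else ψ x) := by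
    intro ξ
    refine hh.comp (continuous_pi fun x => ?_)
    split_ifs <;> fun_prop
  have hc2 : Continuous fun q : (ι → X) × (ι → X) × (ι → X) =>
      h (fun x => if P (θ x) then q.1 x else q.2.1 x) *
        h (fun x => if P (θ x) then q.1 x else q.2.2 x) := by
    refine Continuous.mul (hh.comp (continuous_pi fun x => ?_))
      (hh.comp (continuous_pi fun x => ?_)) <;> split_ifs <;> fun_prop
  have e : ∀ q : (ι → X) × (ι → X) × (ι → X),
      h (fun x => if P x then (if P (θ x) then q.1 x else q.2.1 x) else q.2.2 (θ x)) *
      h (fun x => if P (θ x) then (if P (θ (θ x)) then q.1 (θ x) else q.2.1 (θ x))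
        else q.2.2 (θ (θ x))) =
      h (fun x => if P (θ x) then q.1 x else q.2.1 x) *
        h (fun x => if P (θ x) then q.1 x else q.2.2 x) := by
    intro q
    congr 1
    · apply hdep; intro x hx; simp [hx]
    · apply hdep; intro x hx
      by_cases hQ : P (θ x)
      · simp [hx, hfix x hx hQ]
      · simp [hQ, hθ]
  simp only [e]
  rw [integral_prod _ (cont_integrable _ hc2)]
  refine integral_nonneg fun ξ => ?_
  simp only
  rw [integral_prod_mul (fun ψ : ι → X => h (fun x => if P (θ x) then ξ x else ψ x))
    (fun ψ : ι → X => h (fun x => if P (θ x) then ξ x else ψ x))]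
  exact mul_self_nonneg _

lemma perm_measurePreserving (ν : Measure X) [IsProbabilityMeasure ν] (σ : ι ≃ ι) :
    MeasurePreserving (fun (φ : ι → X) (x : ι) => φ (σ x))
      (Measure.pi fun _ : ι => ν) (Measure.pi fun _ : ι => ν) := by
  have hm : Measurable (fun (φ : ι → X) (x : ι) => φ (σ x)) := by fun_prop
  refine ⟨hm, ?_⟩
  symm
  refine Measure.pi_eq fun s hs => ?_
  rw [Measure.map_apply hm (MeasurableSet.univ_pi hs)]
  have : (fun (φ : ι → X) (x : ι) => φ (σ x)) ⁻¹' (Set.univ.pi s)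
      = Set.univ.pi fun x => s (σ.symm x) := by
    ext φ
    simp only [Set.mem_preimage, Set.mem_pi, Set.mem_univ, true_implies]
    constructor
    · intro h x; simpa using h (σ.symm x)
    · intro h x; simpa using h (σ x)
  rw [this, Measure.pi_pi]
  exact Equiv.prod_comp σ.symm (fun x => ν (s x))

end General

section Sphere

open scoped Pointwise

variable {N : ℕ} [NeZero N]

instance : IsProbabilityMeasure (sphereUniform N) := by
  constructor
  have h0 : (volume : Measure (EuclideanSpace ℝ (Fin N))).toSphere Set.univ ≠ 0 := by
    rw [Measure.measure_univ_ne_zero]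
    exact (volume : Measure (EuclideanSpace ℝ (Fin N))).toSphere_ne_zero
  simp only [sphereUniform, Measure.smul_apply, smul_eq_mul]
  exact ENNReal.inv_mul_cancel h0 (measure_ne_top _ _)

/-- The action of a linear isometry on the sphere. -/
noncomputable def sphMap (e : EuclideanSpace ℝ (Fin N) ≃ₗᵢ[ℝ] EuclideanSpace ℝ (Fin N)) (v : SpinSphere N) :
    SpinSphere N := ⟨e v, by simp⟩

lemma sphMap_continuous (e : EuclideanSpace ℝ (Fin N) ≃ₗᵢ[ℝ] EuclideanSpace ℝ (Fin N)) :
    Continuous (sphMap e) := by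
  unfold sphMap; fun_prop

lemma sphMap_mp (e : EuclideanSpace ℝ (Fin N) ≃ₗᵢ[ℝ] EuclideanSpace ℝ (Fin N)) :
    MeasurePreserving (sphMap e) (sphereUniform N) (sphereUniform N) := by
  have hm := (sphMap_continuous e).measurable
  have h1 : MeasurePreserving (sphMap e)
      (volume : Measure (EuclideanSpace ℝ (Fin N))).toSphere
      (volume : Measure (EuclideanSpace ℝ (Fin N))).toSphere := by
    refine ⟨hm, ?_⟩
    ext s hs
    rw [Measure.map_apply hm hs, Measure.toSphere_apply' _ (hm hs), Measure.toSphere_apply' _ hs]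
    congr 1
    have : (Set.Ioo (0:ℝ) 1 • (((↑) : SpinSphere N → EuclideanSpace ℝ (Fin N)) '' (sphMap e ⁻¹' s)))
        = e ⁻¹' (Set.Ioo (0:ℝ) 1 • (((↑) : SpinSphere N → EuclideanSpace ℝ (Fin N)) '' s)) := by
      ext v
      simp only [Set.mem_smul, Set.mem_image, Set.mem_preimage]
      constructor
      · rintro ⟨r, hr, w, ⟨u, hu, rfl⟩, rfl⟩
        exact ⟨r, hr, _, ⟨_, hu, rfl⟩, by simp [sphMap]⟩
      · rintro ⟨r, hr, w, ⟨u, hu, rfl⟩, huv⟩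
        refine ⟨r, hr, _, ⟨sphMap e.symm u, ?_, rfl⟩, ?_⟩
        · have : sphMap e (sphMap e.symm u) = u := by ext1; simp [sphMap]
          simpa [this] using hu
        · apply e.injective; rw [← huv]; simp [sphMap]
    rw [this]
    exact e.measurePreserving.measure_preimage_equiv (f := e.toHomeomorph.toMeasurableEquiv) _
  exact h1.smul_measure _

end Sphere

end SpinAux

namespace SpinAux

section RP

variable {ι : Type*} [Fintype ι] [DecidableEq ι] {N : ℕ} [NeZero N]

lemma comp_cont (x : ι) (i : Fin N) :
    Continuous fun φ : ι → SpinSphere N => (φ x : EuclideanSpace ℝ (Fin N)) i := by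
  fun_prop

/-- The quadratic form with coupling `J`. -/
noncomputable def quad (J : ι → ι → ℝ) (φ : ι → SpinSphere N) : ℝ :=
  ∑ x, ∑ y, ∑ i, J x y * ((φ x : EuclideanSpace ℝ (Fin N)) i * (φ y : EuclideanSpace ℝ (Fin N)) i)

lemma quad_cont (J : ι → ι → ℝ) : Continuous (quad (N := N) J) := by
  unfold quad; fun_prop

lemma quad_perm (J : ι → ι → ℝ) (σ : ι ≃ ι) (φ : ι → SpinSphere N) :
    quad (fun x y => J (σ x) (σ y)) (fun x => φ (σ x)) = quad J φ := by
  unfold quad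
  rw [← Equiv.sum_comp σ (fun x => ∑ y, ∑ i, J x y *
    ((φ x : EuclideanSpace ℝ (Fin N)) i * (φ y : EuclideanSpace ℝ (Fin N)) i))]
  refine Finset.sum_congr rfl fun x _ => ?_
  rw [← Equiv.sum_comp σ (fun y => ∑ i, J (σ x) y *
    ((φ (σ x) : EuclideanSpace ℝ (Fin N)) i * (φ y : EuclideanSpace ℝ (Fin N)) i))]

/-- Reflection positivity, moment version. -/
lemma rp_pow (θ : ι ≃ ι) (P : ι → Prop) [DecidablePred P] (hθ : ∀ x, θ (θ x) = x)
    (hcov : ∀ x, P x ∨ P (θ x)) (hfix : ∀ x, P x → P (θ x) → θ x = x)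
    (c : ι → ℝ) (hc : ∀ x, 0 ≤ c x) (k : ℕ) :
    ∀ h : (ι → SpinSphere N) → ℝ, Continuous h →
    (∀ φ ψ : ι → SpinSphere N, (∀ x, P x → φ x = ψ x) → h φ = h ψ) →
    0 ≤ ∫ φ, h φ * h (fun x => φ (θ x)) * (∑ x, ∑ i, c x *
      ((φ x : EuclideanSpace ℝ (Fin N)) i * (φ (θ x) : EuclideanSpace ℝ (Fin N)) i)) ^ k
      ∂(Measure.pi fun _ : ι => sphereUniform N) := by
  induction k with
  | zero =>
    intro h hh hdep
    simpa using core_rp (sphereUniform N) θ P hθ hcov hfix h hh hdep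
  | succ k ih =>
    intro h hh hdep
    set t : (ι → SpinSphere N) → ℝ := fun φ => ∑ x, ∑ i, c x *
      ((φ x : EuclideanSpace ℝ (Fin N)) i * (φ (θ x) : EuclideanSpace ℝ (Fin N)) i) with ht
    have htc : Continuous t := by rw [ht]; fun_prop
    have e : ∀ φ : ι → SpinSphere N, h φ * h (fun x => φ (θ x)) * t φ ^ (k + 1) =
        ∑ x, ∑ i, c x * (((φ x : EuclideanSpace ℝ (Fin N)) i *
          (φ (θ x) : EuclideanSpace ℝ (Fin N)) i) * (h φ * h (fun x => φ (θ x)) * t φ ^ k)) := by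
      intro φ
      rw [pow_succ, ← mul_assoc]
      nth_rewrite 2 [ht]
      simp only [Finset.mul_sum]
      refine Finset.sum_congr rfl fun x _ => Finset.sum_congr rfl fun i _ => ?_
      ring
    change 0 ≤ ∫ φ, h φ * h (fun x => φ (θ x)) * t φ ^ (k + 1) ∂_
    simp only [e]
    rw [integral_finsetSum _ fun x _ => cont_integrable _ (by fun_prop)]
    refine Finset.sum_nonneg fun x _ => ?_
    rw [integral_finsetSum _ fun i _ => cont_integrable _ (by fun_prop)]
    refine Finset.sum_nonneg fun i _ => ?_
    rw [integral_const_mul]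
    refine mul_nonneg (hc x) ?_
    rcases hcov x with hx | hx
    · have := ih (fun φ => (φ x : EuclideanSpace ℝ (Fin N)) i * h φ) (by fun_prop)
        (fun φ ψ hφ => by simp only [hdep φ ψ hφ, hφ x hx])
      refine this.trans_eq (integral_congr_ae (Filter.Eventually.of_forall fun φ => ?_))
      simp only [ht]; ring
    · have := ih (fun φ => (φ (θ x) : EuclideanSpace ℝ (Fin N)) i * h φ) (by fun_prop)
        (fun φ ψ hφ => by simp only [hdep φ ψ hφ, hφ (θ x) hx])
      refine this.trans_eq (integral_congr_ae (Filter.Eventually.of_forall fun φ => ?_))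
      simp only [ht, hθ]; ring

/-- Reflection positivity of the Gibbs weight. -/
lemma rp_quad (θ : ι ≃ ι) (P : ι → Prop) [DecidablePred P] (hθ : ∀ x, θ (θ x) = x)
    (hcov : ∀ x, P x ∨ P (θ x)) (hfix : ∀ x, P x → P (θ x) → θ x = x)
    (J : ι → ι → ℝ) (hJ0 : ∀ x y, 0 ≤ J x y) (hJθ : ∀ x y, J (θ x) (θ y) = J x y)
    (hJP : ∀ x y, J x y ≠ 0 → y = θ x ∨ (P x ∧ P y) ∨ (P (θ x) ∧ P (θ y)))
    (f : (ι → SpinSphere N) → ℝ) (hf : Continuous f)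
    (hdep : ∀ φ ψ : ι → SpinSphere N, (∀ x, P x → φ x = ψ x) → f φ = f ψ) :
    0 ≤ ∫ φ, f φ * f (fun x => φ (θ x)) * Real.exp (quad J φ)
      ∂(Measure.pi fun _ : ι => sphereUniform N) := by
  set K : ι → ι → ℝ := fun x y => if y = θ x then 0 else
    if P x ∧ P y then (if P (θ x) ∧ P (θ y) then J x y / 2 else J x y) else 0 with hK
  set t : (ι → SpinSphere N) → ℝ := fun φ => ∑ x, ∑ i, J x (θ x) *
      ((φ x : EuclideanSpace ℝ (Fin N)) i * (φ (θ x) : EuclideanSpace ℝ (Fin N)) i) with ht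
  have htc : Continuous t := by rw [ht]; fun_prop
  have hJK : ∀ x y, J x y = K x y + K (θ x) (θ y) + (if y = θ x then J x y else 0) := by
    intro x y
    have h1 : (θ y = x) ↔ y = θ x :=
      ⟨fun h => by rw [← h, hθ], fun h => by rw [h, hθ]⟩
    have h2 := hJP x y
    simp only [hK, hθ, h1, hJθ]
    by_cases hy : y = θ x
    · simp [hy]
    · by_cases hz : J x y = 0
      · simp [hz]
      · have h2 := h2 hz
        simp only [hy, false_or, if_false] at h2 ⊢
        by_cases a1 : P x ∧ P y <;> by_cases a2 : P (θ x) ∧ P (θ y)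
        · simp [a1, a2]
        · simp only [a1, a2, if_true, if_false, and_self]; simp
        · simp only [a1, a2, if_true, if_false, and_self]; simp
        · tauto
  have hdec : ∀ φ : ι → SpinSphere N,
      quad J φ = quad K φ + quad K (fun x => φ (θ x)) + t φ := by
    intro φ
    have h1 : quad K (fun x => φ (θ x)) = quad (fun x y => K (θ x) (θ y)) φ := by
      rw [← quad_perm (fun x y => K (θ x) (θ y)) θ φ]
      simp only [hθ]
    have h2 : t φ = quad (fun x y => if y = θ x then J x y else 0) φ := by
      simp only [ht, quad]
      refine Finset.sum_congr rfl fun x _ => ?_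
      rw [Finset.sum_eq_single (θ x)]
      · simp
      · intro y _ hy; simp [hy]
      · simp
    rw [h1, h2]
    simp only [quad, ← Finset.sum_add_distrib]
    refine Finset.sum_congr rfl fun x _ => Finset.sum_congr rfl fun y _ =>
      Finset.sum_congr rfl fun i _ => ?_
    rw [← add_mul, ← add_mul, ← hJK x y]
  have hKdep : ∀ φ ψ : ι → SpinSphere N, (∀ x, P x → φ x = ψ x) → quad K φ = quad K ψ := by
    intro φ ψ h
    simp only [quad]
    refine Finset.sum_congr rfl fun x _ => Finset.sum_congr rfl fun y _ =>
      Finset.sum_congr rfl fun i _ => ?_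
    by_cases hP : P x ∧ P y
    · rw [h x hP.1, h y hP.2]
    · simp [hK, hP]
  have hKc := quad_cont (N := N) K
  have := integral_mul_exp_nonneg (Measure.pi fun _ : ι => sphereUniform N)
    (fun φ => (f φ * Real.exp (quad K φ)) *
      (f (fun x => φ (θ x)) * Real.exp (quad K (fun x => φ (θ x))))) t (by fun_prop) htc
    (fun k => rp_pow θ P hθ hcov hfix (fun x => J x (θ x)) (fun x => hJ0 _ _) k
      (fun φ => f φ * Real.exp (quad K φ)) (by fun_prop)
      (fun φ ψ h => by rw [hdep φ ψ h, hKdep φ ψ h]))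
  refine this.trans_eq (integral_congr_ae (Filter.Eventually.of_forall fun φ => ?_))
  simp only [hdec φ, Real.exp_add]
  ring

/-- Monomials in the spins. -/
noncomputable def mono (n : ι → Fin N → ℕ) (φ : ι → SpinSphere N) : ℝ :=
  ∏ x, ∏ i, ((φ x : EuclideanSpace ℝ (Fin N)) i) ^ n x i

/-- Flip of one coordinate. -/
noncomputable def flip (j : Fin N) : EuclideanSpace ℝ (Fin N) ≃ₗᵢ[ℝ] EuclideanSpace ℝ (Fin N) :=
  LinearIsometryEquiv.piLpCongrRight 2
    (fun i => if i = j then LinearIsometryEquiv.neg ℝ else LinearIsometryEquiv.refl ℝ ℝ)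

lemma flip_apply (j i : Fin N) (v : EuclideanSpace ℝ (Fin N)) :
    flip j v i = if i = j then - v i else v i := by
  simp only [flip, LinearIsometryEquiv.piLpCongrRight_apply]
  split_ifs with h <;> simp

lemma sphere_mono_nonneg (n : Fin N → ℕ) :
    0 ≤ ∫ v : SpinSphere N, ∏ i, ((v : EuclideanSpace ℝ (Fin N)) i) ^ n i ∂(sphereUniform N) := by
  by_cases h : ∀ i, Even (n i)
  · exact integral_nonneg fun v => Finset.prod_nonneg fun i _ => (h i).pow_nonneg _
  · push Not at h
    obtain ⟨j, hj⟩ := h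
    rw [Nat.not_even_iff_odd] at hj
    have mp := sphMap_mp (flip j)
    have hc : Continuous fun v : SpinSphere N =>
      ∏ i, ((v : EuclideanSpace ℝ (Fin N)) i) ^ n i := by fun_prop
    have e := integral_map (μ := sphereUniform N) mp.measurable.aemeasurable
      (f := fun v : SpinSphere N => ∏ i, ((v : EuclideanSpace ℝ (Fin N)) i) ^ n i)
      hc.stronglyMeasurable.aestronglyMeasurable
    rw [mp.map_eq] at e
    have e2 : ∀ v : SpinSphere N, ∏ i, ((sphMap (flip j) v : EuclideanSpace ℝ (Fin N)) i) ^ n i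
        = - ∏ i, ((v : EuclideanSpace ℝ (Fin N)) i) ^ n i := by
      intro v
      rw [← Finset.mul_prod_erase _ _ (Finset.mem_univ j),
        ← Finset.mul_prod_erase Finset.univ (fun i => ((v : EuclideanSpace ℝ (Fin N)) i) ^ n i)
          (Finset.mem_univ j), ← neg_mul]
      congr 1
      · simp [sphMap, flip_apply, hj.neg_pow]
      · refine Finset.prod_congr rfl fun i hi => ?_
        simp [sphMap, flip_apply, Finset.ne_of_mem_erase hi]
    simp only [e2, integral_neg] at e
    linarith

lemma mono_nonneg (n : ι → Fin N → ℕ) :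
    0 ≤ ∫ φ, mono n φ ∂(Measure.pi fun _ : ι => sphereUniform N) := by
  unfold mono
  rw [integral_fintype_prod_eq_prod (fun x (v : SpinSphere N) =>
    ∏ i, ((v : EuclideanSpace ℝ (Fin N)) i) ^ n x i)]
  exact Finset.prod_nonneg fun x _ => sphere_mono_nonneg _

lemma mono_cont (n : ι → Fin N → ℕ) : Continuous (mono n) := by unfold mono; fun_prop

lemma mono_mul (n : ι → Fin N → ℕ) (x : ι) (i : Fin N) (φ : ι → SpinSphere N) :
    (φ x : EuclideanSpace ℝ (Fin N)) i * mono n φ = mono (n + Pi.single x (Pi.single i 1)) φ := by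
  have : mono (Pi.single x (Pi.single i 1)) φ = (φ x : EuclideanSpace ℝ (Fin N)) i := by
    unfold mono
    rw [Finset.prod_eq_single x]
    · rw [Finset.prod_eq_single i]
      · simp
      · intro j _ hj; simp [hj]
      · simp
    · intro y _ hy; simp [hy]
    · simp
  rw [← this, mul_comm]
  unfold mono
  simp only [← Finset.prod_mul_distrib, Pi.add_apply, pow_add]

lemma mono_quad_pow (J : ι → ι → ℝ) (hJ0 : ∀ x y, 0 ≤ J x y) (k : ℕ) :
    ∀ n : ι → Fin N → ℕ,
      0 ≤ ∫ φ, mono n φ * quad J φ ^ k ∂(Measure.pi fun _ : ι => sphereUniform N) := by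
  have hq := quad_cont (N := N) J
  induction k with
  | zero => intro n; simpa using mono_nonneg n
  | succ k ih =>
    intro n
    have hn := mono_cont n
    have e : ∀ φ : ι → SpinSphere N, mono n φ * quad J φ ^ (k + 1) =
        ∑ x, ∑ y, ∑ i, J x y * (((φ x : EuclideanSpace ℝ (Fin N)) i *
          (φ y : EuclideanSpace ℝ (Fin N)) i) * (mono n φ * quad J φ ^ k)) := by
      intro φ
      rw [pow_succ, ← mul_assoc]
      nth_rewrite 2 [quad]
      simp only [Finset.mul_sum]
      refine Finset.sum_congr rfl fun x _ => Finset.sum_congr rfl fun y _ =>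
        Finset.sum_congr rfl fun i _ => ?_
      ring
    simp only [e]
    rw [integral_finsetSum _ fun x _ => cont_integrable _ (by fun_prop)]
    refine Finset.sum_nonneg fun x _ => ?_
    rw [integral_finsetSum _ fun y _ => cont_integrable _ (by fun_prop)]
    refine Finset.sum_nonneg fun y _ => ?_
    rw [integral_finsetSum _ fun i _ => cont_integrable _ (by fun_prop)]
    refine Finset.sum_nonneg fun i _ => ?_
    rw [integral_const_mul]
    refine mul_nonneg (hJ0 x y) ?_
    refine (ih (n + Pi.single x (Pi.single i 1) + Pi.single y (Pi.single i 1))).trans_eq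
      (integral_congr_ae (Filter.Eventually.of_forall fun φ => ?_))
    simp only [← mono_mul]; ring

/-- First Griffiths inequality for two spin components. -/
lemma griffiths (J : ι → ι → ℝ) (hJ0 : ∀ x y, 0 ≤ J x y) (x y : ι) (i : Fin N) :
    0 ≤ ∫ φ, (φ x : EuclideanSpace ℝ (Fin N)) i * (φ y : EuclideanSpace ℝ (Fin N)) i *
      Real.exp (quad J φ) ∂(Measure.pi fun _ : ι => sphereUniform N) := by
  have h0 : ∀ φ : ι → SpinSphere N, (φ x : EuclideanSpace ℝ (Fin N)) i *
      (φ y : EuclideanSpace ℝ (Fin N)) i =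
      mono (0 + Pi.single y (Pi.single i 1) + Pi.single x (Pi.single i 1)) φ := by
    intro φ
    rw [← mono_mul, ← mono_mul]; simp [mono]
  simp only [h0]
  exact integral_mul_exp_nonneg _ _ _ (mono_cont _) (quad_cont J)
    (fun k => mono_quad_pow J hJ0 k _)

end RP

end SpinAux

namespace SpinAux

section Gibbs

variable {d L N : ℕ} [NeZero L] [NeZero N]

/-- Couplings of the torus model. -/
noncomputable def cpl (d L : ℕ) (β : ℝ) (x y : TorusPt d L) : ℝ := if torusAdj x y then β / 2 else 0

lemma energy_eq (β : ℝ) (φ : SpinCfg d L N) : -β * hamiltonian φ = quad (cpl d L β) φ := by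
  unfold hamiltonian quad cpl
  simp only [Finset.mul_sum, ← mul_assoc]
  refine Finset.sum_congr rfl fun x _ => Finset.sum_congr rfl fun y _ => ?_
  by_cases h : torusAdj x y
  · simp only [h, if_true, PiLp.inner_apply, Finset.mul_sum]
    refine Finset.sum_congr rfl fun i _ => ?_
    simp only [RCLike.inner_apply, conj_trivial]
    ring
  · simp [h]

instance : IsProbabilityMeasure (spinMeasure d L N) := by
  unfold spinMeasure; infer_instance

lemma weight_cont (β : ℝ) : Continuous fun φ : SpinCfg d L N => Real.exp (-β * hamiltonian φ) := by
  simp only [energy_eq]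
  exact Real.continuous_exp.comp (quad_cont _)

lemma Z_pos (β : ℝ) : 0 < ∫ φ, Real.exp (-β * hamiltonian φ) ∂(spinMeasure d L N) :=
  integral_exp_pos (cont_integrable _ (weight_cont β))

lemma gibbs_add (β : ℝ) {f g : SpinCfg d L N → ℝ} (hf : Continuous f) (hg : Continuous g) :
    gibbsExp d L N β (fun φ => f φ + g φ) = gibbsExp d L N β f + gibbsExp d L N β g := by
  have hw := weight_cont (d := d) (L := L) (N := N) β
  unfold gibbsExp
  simp only [add_mul]
  rw [integral_add (cont_integrable _ (by fun_prop)) (cont_integrable _ (by fun_prop)), mul_add]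

lemma gibbs_smul (β : ℝ) (c : ℝ) (f : SpinCfg d L N → ℝ) :
    gibbsExp d L N β (fun φ => c * f φ) = c * gibbsExp d L N β f := by
  unfold gibbsExp
  simp only [mul_assoc]
  rw [integral_const_mul]; ring

lemma gibbs_sum (β : ℝ) {κ : Type*} (s : Finset κ) (f : κ → SpinCfg d L N → ℝ)
    (hf : ∀ k, Continuous (f k)) :
    gibbsExp d L N β (fun φ => ∑ k ∈ s, f k φ) = ∑ k ∈ s, gibbsExp d L N β (f k) := by
  have hw := weight_cont (d := d) (L := L) (N := N) β
  unfold gibbsExp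
  simp only [Finset.sum_mul]
  rw [integral_finsetSum _ fun k _ => cont_integrable _ (by have := hf k; fun_prop), Finset.mul_sum]

lemma gibbs_mono (β : ℝ) {f g : SpinCfg d L N → ℝ} (hf : Continuous f) (hg : Continuous g)
    (h : ∀ φ, f φ ≤ g φ) : gibbsExp d L N β f ≤ gibbsExp d L N β g := by
  have hw := weight_cont (d := d) (L := L) (N := N) β
  unfold gibbsExp
  refine mul_le_mul_of_nonneg_left ?_ (inv_nonneg.2 (Z_pos β).le)
  exact integral_mono (cont_integrable _ (hf.mul hw)) (cont_integrable _ (hg.mul hw))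
    fun φ => mul_le_mul_of_nonneg_right (h φ) (Real.exp_pos _).le

lemma gibbs_one (β : ℝ) : gibbsExp d L N β (fun _ => 1) = 1 := by
  unfold gibbsExp
  simp only [one_mul]
  exact inv_mul_cancel₀ (Z_pos β).ne'

/-- Invariance of the Gibbs expectation. -/
lemma gibbs_map (β : ℝ) (T : SpinCfg d L N → SpinCfg d L N)
    (hT : MeasurePreserving T (spinMeasure d L N) (spinMeasure d L N))
    (hH : ∀ φ, quad (cpl d L β) (T φ) = quad (cpl d L β) φ)
    {f : SpinCfg d L N → ℝ} (hf : Continuous f) :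
    gibbsExp d L N β (fun φ => f (T φ)) = gibbsExp d L N β f := by
  unfold gibbsExp
  congr 1
  have hc : Continuous fun φ : SpinCfg d L N => f φ * Real.exp (-β * hamiltonian φ) :=
    hf.mul (weight_cont β)
  have := integral_map (μ := spinMeasure d L N) hT.measurable.aemeasurable
    (f := fun φ : SpinCfg d L N => f φ * Real.exp (-β * hamiltonian φ))
    hc.stronglyMeasurable.aestronglyMeasurable
  rw [hT.map_eq] at this
  rw [this]
  simp only [energy_eq, hH]

lemma corr_perm (β : ℝ) (σ : TorusPt d L ≃ TorusPt d L)
    (hσ : ∀ x y, torusAdj (σ x) (σ y) ↔ torusAdj x y) (x y : TorusPt d L) :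
    corrOne d L N β (σ x) (σ y) = corrOne d L N β x y := by
  unfold corrOne
  refine gibbs_map β (fun φ x => φ (σ x)) (perm_measurePreserving (sphereUniform N) σ) (fun φ => ?_)
    (f := fun φ => (φ x : EuclideanSpace ℝ (Fin N)) 0 * (φ y : EuclideanSpace ℝ (Fin N)) 0)
    (by fun_prop)
  have := quad_perm (N := N) (cpl d L β) σ φ
  rw [← this]
  congr 1
  ext x y
  simp [cpl, hσ]

lemma corr_comm (β : ℝ) (x y : TorusPt d L) : corrOne d L N β x y = corrOne d L N β y x := by
  unfold corrOne; simp only [mul_comm]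

lemma adj_trans (a x y : TorusPt d L) : torusAdj (x + a) (y + a) ↔ torusAdj x y := by
  unfold torusAdj
  have h1 : ∀ (x : TorusPt d L) j (c : ZMod L), Function.update x j (x j + c) = x + Pi.single j c := by
    intro x j c; ext k
    by_cases h : k = j
    · subst h; simp
    · simp [h]
  have h2 : ∀ (x : TorusPt d L) j (c : ZMod L), Function.update x j (x j - c) = x - Pi.single j c := by
    intro x j c; ext k
    by_cases h : k = j
    · subst h; simp
    · simp [h]
  simp only [h1, h2]
  refine exists_congr fun j => or_congr ?_ ?_
  · rw [add_right_comm, add_left_inj]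
  · rw [add_sub_right_comm, add_left_inj]

lemma corr_trans (β : ℝ) (x y : TorusPt d L) :
    corrOne d L N β x y = corrOne d L N β (torusOrigin d L) (y - x) := by
  have := corr_perm (N := N) β (Equiv.addRight x) (fun u v => adj_trans x u v)
    (torusOrigin d L) (y - x)
  rw [← this]
  congr 1
  · ext; simp [torusOrigin]
  · simp

lemma corr_neg (β : ℝ) (u : TorusPt d L) :
    corrOne d L N β (torusOrigin d L) (-u) = corrOne d L N β (torusOrigin d L) u := by
  rw [corr_comm, corr_trans]
  congr 1
  ext; simp [torusOrigin]

lemma corr_nonneg (β : ℝ) (hβ : 0 ≤ β) (x y : TorusPt d L) : 0 ≤ corrOne d L N β x y := by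
  unfold corrOne gibbsExp
  refine mul_nonneg (inv_nonneg.2 (Z_pos β).le) ?_
  simp only [energy_eq]
  refine griffiths (cpl d L β) (fun x y => ?_) x y 0
  unfold cpl; split_ifs <;> linarith

lemma corr_self (β : ℝ) (x : TorusPt d L) : corrOne d L N β x x = 1 / N := by
  have hN : (N : ℝ) ≠ 0 := Nat.cast_ne_zero.2 (NeZero.ne N)
  have h1 : ∀ i : Fin N, gibbsExp d L N β (fun φ => (φ x : EuclideanSpace ℝ (Fin N)) i *
      (φ x : EuclideanSpace ℝ (Fin N)) i) = corrOne d L N β x x := by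
    intro i
    unfold corrOne
    have hap : ∀ (v : SpinSphere N) (j : Fin N), (sphMap
        (LinearIsometryEquiv.piLpCongrLeft 2 ℝ ℝ (Equiv.swap 0 i)) v : EuclideanSpace ℝ (Fin N)) j =
        (v : EuclideanSpace ℝ (Fin N)) (Equiv.swap 0 i j) := by
      intro v j
      simp [sphMap, LinearIsometryEquiv.piLpCongrLeft_apply, Equiv.piCongrLeft']
    have := gibbs_map (d := d) (L := L) (N := N) β
      (fun φ x => sphMap (LinearIsometryEquiv.piLpCongrLeft 2 ℝ ℝ (Equiv.swap 0 i)) (φ x))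
      (measurePreserving_pi _ _ fun _ => sphMap_mp _) (fun φ => by
        unfold quad
        refine Finset.sum_congr rfl fun x _ => Finset.sum_congr rfl fun y _ => ?_
        simp only [hap]
        exact Equiv.sum_comp (Equiv.swap 0 i) (fun j => cpl d L β x y *
          ((φ x : EuclideanSpace ℝ (Fin N)) j * (φ y : EuclideanSpace ℝ (Fin N)) j)))
      (f := fun φ => (φ x : EuclideanSpace ℝ (Fin N)) 0 * (φ x : EuclideanSpace ℝ (Fin N)) 0)
      (by fun_prop)
    rw [← this]
    simp only [hap, Equiv.swap_apply_left]
  have h2 := gibbs_sum (d := d) (L := L) (N := N) β Finset.univ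
    (fun i φ => (φ x : EuclideanSpace ℝ (Fin N)) i * (φ x : EuclideanSpace ℝ (Fin N)) i)
    (fun i => by fun_prop)
  simp only [h1, Finset.sum_const, Finset.card_univ, Fintype.card_fin, nsmul_eq_mul] at h2
  have h3 : ∀ φ : SpinCfg d L N, ∑ i, (φ x : EuclideanSpace ℝ (Fin N)) i *
      (φ x : EuclideanSpace ℝ (Fin N)) i = 1 := by
    intro φ
    have := EuclideanSpace.real_norm_sq_eq (φ x : EuclideanSpace ℝ (Fin N))
    rw [norm_eq_of_mem_sphere] at this
    simp only [← pow_two]; linarith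
  simp only [h3, gibbs_one] at h2
  field_simp; linarith

/-- Variogram. -/
lemma vario (β : ℝ) (x y : TorusPt d L) :
    gibbsExp d L N β (fun φ => ((φ x : EuclideanSpace ℝ (Fin N)) 0 -
      (φ y : EuclideanSpace ℝ (Fin N)) 0) ^ 2) = 2 * (1 / N - corrOne d L N β x y) := by
  have e : ∀ φ : SpinCfg d L N, ((φ x : EuclideanSpace ℝ (Fin N)) 0 -
      (φ y : EuclideanSpace ℝ (Fin N)) 0) ^ 2 =
      (φ x : EuclideanSpace ℝ (Fin N)) 0 * (φ x : EuclideanSpace ℝ (Fin N)) 0 +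
      ((φ y : EuclideanSpace ℝ (Fin N)) 0 * (φ y : EuclideanSpace ℝ (Fin N)) 0 +
      (-2) * ((φ x : EuclideanSpace ℝ (Fin N)) 0 * (φ y : EuclideanSpace ℝ (Fin N)) 0)) := by
    intro φ; ring
  simp only [e]
  rw [gibbs_add _ (by fun_prop) (by fun_prop), gibbs_add _ (by fun_prop) (by fun_prop), gibbs_smul]
  have h1 := corr_self (d := d) (L := L) (N := N) β x
  have h2 := corr_self (d := d) (L := L) (N := N) β y
  unfold corrOne at *
  rw [h1, h2]; ring

/-- Reflection positivity for two-point functions. -/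
lemma corr_rp (β : ℝ) (hβ : 0 ≤ β) (θ : TorusPt d L ≃ TorusPt d L) (P : TorusPt d L → Prop)
    [DecidablePred P]
    (hθ : ∀ x, θ (θ x) = x) (hcov : ∀ x, P x ∨ P (θ x)) (hfix : ∀ x, P x → P (θ x) → θ x = x)
    (hadj : ∀ x y, torusAdj (θ x) (θ y) ↔ torusAdj x y)
    (hP : ∀ x y, torusAdj x y → y = θ x ∨ (P x ∧ P y) ∨ (P (θ x) ∧ P (θ y)))
    (a b : TorusPt d L) (ha : P a) (hb : P b) :
    2 * corrOne d L N β a (θ b) ≤ corrOne d L N β a (θ a) + corrOne d L N β b (θ b) := by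
  have h := rp_quad (N := N) θ P hθ hcov hfix (cpl d L β)
    (fun x y => by unfold cpl; split_ifs <;> linarith) (fun x y => by simp [cpl, hadj])
    (fun x y hxy => hP x y (by by_contra h; simp [cpl, h] at hxy))
    (fun φ => (φ a : EuclideanSpace ℝ (Fin N)) 0 - (φ b : EuclideanSpace ℝ (Fin N)) 0)
    (by fun_prop) (fun φ ψ hφ => by simp only [hφ a ha, hφ b hb])
  have h2 : 0 ≤ gibbsExp d L N β (fun φ =>
      ((φ a : EuclideanSpace ℝ (Fin N)) 0 - (φ b : EuclideanSpace ℝ (Fin N)) 0) *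
      ((φ (θ a) : EuclideanSpace ℝ (Fin N)) 0 - (φ (θ b) : EuclideanSpace ℝ (Fin N)) 0)) := by
    unfold gibbsExp
    refine mul_nonneg (inv_nonneg.2 (Z_pos β).le) ?_
    simp only [energy_eq]
    exact h
  have e : ∀ φ : SpinCfg d L N,
      ((φ a : EuclideanSpace ℝ (Fin N)) 0 - (φ b : EuclideanSpace ℝ (Fin N)) 0) *
      ((φ (θ a) : EuclideanSpace ℝ (Fin N)) 0 - (φ (θ b) : EuclideanSpace ℝ (Fin N)) 0) =
      (φ a : EuclideanSpace ℝ (Fin N)) 0 * (φ (θ a) : EuclideanSpace ℝ (Fin N)) 0 +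
      ((φ b : EuclideanSpace ℝ (Fin N)) 0 * (φ (θ b) : EuclideanSpace ℝ (Fin N)) 0 +
      ((-1) * ((φ a : EuclideanSpace ℝ (Fin N)) 0 * (φ (θ b) : EuclideanSpace ℝ (Fin N)) 0) +
      (-1) * ((φ b : EuclideanSpace ℝ (Fin N)) 0 * (φ (θ a) : EuclideanSpace ℝ (Fin N)) 0))) := by
    intro φ; ring
  simp only [e] at h2
  rw [gibbs_add _ (by fun_prop) (by fun_prop), gibbs_add _ (by fun_prop) (by fun_prop),
    gibbs_add _ (by fun_prop) (by fun_prop), gibbs_smul, gibbs_smul] at h2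
  have h3 : corrOne d L N β b (θ a) = corrOne d L N β a (θ b) := by
    rw [← corr_perm β θ hadj b (θ a), hθ, corr_comm]
  unfold corrOne at *
  linarith

end Gibbs

end SpinAux

namespace SpinAux

section Torus

variable {d L N : ℕ} [NeZero L] [NeZero N]

lemma val_succ' (a : ZMod L) : (a + 1).val = if a.val + 1 = L then 0 else a.val + 1 := by
  have h := ZMod.val_lt a
  rw [ZMod.val_add, ZMod.val_one_eq_one_mod, Nat.add_mod_mod]
  split_ifs with h1
  · rw [h1, Nat.mod_self]
  · exact Nat.mod_eq_of_lt (by omega)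

lemma val_neg' (a : ZMod L) : (-a).val = if a.val = 0 then 0 else L - a.val := by
  rw [ZMod.neg_val]; simp only [ZMod.val_eq_zero]

/-- One-dimensional reflection facts. -/
lemma line_refl (hL : Even L) (s : ℕ) (hs : s = 0 ∨ s = 1) (a : ZMod L) :
    (2 * a.val + s ≤ L ∨ 2 * (-(a + (s : ZMod L))).val + s ≤ L) ∧
    (2 * a.val + s ≤ L → 2 * (-(a + (s : ZMod L))).val + s ≤ L → -(a + (s : ZMod L)) = a) ∧
    (a + 1 = -(a + (s : ZMod L)) ∨ (2 * a.val + s ≤ L ∧ 2 * (a + 1).val + s ≤ L) ∨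
      (2 * (-(a + (s : ZMod L))).val + s ≤ L ∧ 2 * (-(a + 1 + (s : ZMod L))).val + s ≤ L)) := by
  have h := ZMod.val_lt a
  have hL0 := NeZero.ne L
  obtain ⟨m, hm⟩ := hL
  have i1 : ∀ a b : ZMod L, a.val = b.val → a = b := fun a b h => ZMod.val_injective L h
  rcases hs with rfl | rfl
  · simp only [Nat.cast_zero, add_zero]
    refine ⟨?_, fun h1 h2 => i1 _ _ ?_, ?_⟩
    · rw [val_neg']; split_ifs <;> omega
    · rw [val_neg'] at h2 ⊢; split_ifs at * <;> omega
    · right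
      rw [val_neg', val_neg', val_succ']
      split_ifs <;> omega
  · simp only [Nat.cast_one]
    refine ⟨?_, fun h1 h2 => i1 _ _ ?_, ?_⟩
    · rw [val_neg', val_succ']; split_ifs <;> omega
    · rw [val_neg', val_succ'] at h2 ⊢; split_ifs at * <;> omega
    · by_cases hc : a + 1 = -(a + 1)
      · exact Or.inl hc
      · right
        have hc' : (a + 1).val ≠ (-(a + 1)).val := fun h => hc (i1 _ _ h)
        rw [val_neg', val_succ'] at hc'
        rw [val_neg', val_neg', val_succ' (a + 1), val_succ']
        split_ifs at * <;> omega

/-- The reflection `x_i ↦ -s - x_i`. -/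
def refl (i : Fin d) (s : ℕ) : TorusPt d L ≃ TorusPt d L :=
  Function.Involutive.toPerm (fun x => Function.update x i (-(x i + (s : ZMod L)))) (by
    intro x; simp)

lemma refl_apply (i : Fin d) (s : ℕ) (x : TorusPt d L) :
    refl i s x = Function.update x i (-(x i + (s : ZMod L))) := rfl

lemma refl_refl (i : Fin d) (s : ℕ) (x : TorusPt d L) : refl i s (refl i s x) = x := by
  simp [refl_apply]

lemma adj_symm {x y : TorusPt d L} (h : torusAdj x y) : torusAdj y x := by
  obtain ⟨j, rfl | rfl⟩ := h
  · exact ⟨j, Or.inr (by simp)⟩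
  · exact ⟨j, Or.inl (by simp)⟩

lemma refl_adj1 (i : Fin d) (s : ℕ) {x y : TorusPt d L} (h : torusAdj x y) :
    torusAdj (refl i s x) (refl i s y) := by
  obtain ⟨j, hj⟩ := h
  refine ⟨j, ?_⟩
  by_cases hij : j = i
  · subst hij
    rcases hj with rfl | rfl
    · right; simp only [refl_apply, Function.update_idem, Function.update_self]; congr 1; ring
    · left; simp only [refl_apply, Function.update_idem, Function.update_self]; congr 1; ring
  · rcases hj with rfl | rfl
    · left
      simp only [refl_apply, Function.update_of_ne hij, Function.update_of_ne (Ne.symm hij)]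
      rw [Function.update_comm hij]
    · right
      simp only [refl_apply, Function.update_of_ne hij, Function.update_of_ne (Ne.symm hij)]
      rw [Function.update_comm hij]

lemma refl_adj (i : Fin d) (s : ℕ) (x y : TorusPt d L) :
    torusAdj (refl i s x) (refl i s y) ↔ torusAdj x y :=
  ⟨fun h => by simpa [refl_refl] using refl_adj1 i s h, refl_adj1 i s⟩

/-- Correlation as a function of the displacement. -/
noncomputable def gg (d L N : ℕ) [NeZero L] [NeZero N] (β : ℝ) (u : TorusPt d L) : ℝ :=
  corrOne d L N β (torusOrigin d L) u

lemma gg_conv (hL : Even L) (β : ℝ) (hβ : 0 ≤ β) (i : Fin d) (s : ℕ) (hs : s = 0 ∨ s = 1)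
    (k l : ℕ) (hk : 2 * k + s ≤ L) (hl : 2 * l + s ≤ L) (w : TorusPt d L) :
    2 * gg d L N β (Function.update w i ((k + l + s : ℕ) : ZMod L)) ≤
      gg d L N β (Function.update 0 i ((2 * k + s : ℕ) : ZMod L)) +
      gg d L N β (Function.update 0 i ((2 * l + s : ℕ) : ZMod L)) := by
  have hL0 := NeZero.ne L
  have hL2 : 2 ≤ L := by obtain ⟨m, hm⟩ := hL; omega
  have hP1 : ∀ (x : TorusPt d L) (j : Fin d), torusAdj x (Function.update x j (x j + 1)) →
      Function.update x j (x j + 1) = refl i s x ∨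
      (2 * (x i).val + s ≤ L ∧ 2 * (Function.update x j (x j + 1) i).val + s ≤ L) ∨
      (2 * (refl i s x i).val + s ≤ L ∧
        2 * (refl i s (Function.update x j (x j + 1)) i).val + s ≤ L) := by
    intro x j _
    by_cases hij : j = i
    · subst hij
      simp only [refl_apply, Function.update_self]
      rcases (line_refl hL s hs (x j)).2.2 with h | h
      · left; rw [h]
      · right; exact h
    · simp only [refl_apply, Function.update_self, Function.update_of_ne (Ne.symm hij)]
      have := (line_refl hL s hs (x i)).1
      tauto
  have key := corr_rp (N := N) β hβ (refl i s) (fun x => 2 * (x i).val + s ≤ L) (refl_refl i s)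
    (fun x => by
      simp only [refl_apply, Function.update_self]
      exact (line_refl hL s hs (x i)).1)
    (fun x h1 h2 => by
      simp only [refl_apply, Function.update_self] at h2
      rw [refl_apply, (line_refl hL s hs (x i)).2.1 h1 h2, Function.update_eq_self])
    (refl_adj i s)
    (by
      intro x y h
      have h' := adj_symm h
      obtain ⟨j, rfl | hy⟩ := h
      · exact hP1 x j ⟨j, Or.inl rfl⟩
      · have hx : x = Function.update y j (y j + 1) := by subst hy; simp
        have := hP1 y j (hx ▸ h')
        rw [← hx] at this
        rcases this with h | h | h
        · left; rw [h, refl_refl]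
        · exact Or.inr (Or.inl h.symm)
        · exact Or.inr (Or.inr h.symm))
    (Function.update w i (k : ZMod L)) (Function.update 0 i (l : ZMod L))
    (by simp only [Function.update_self]; rw [ZMod.val_cast_of_lt (by omega)]; exact hk)
    (by simp only [Function.update_self]; rw [ZMod.val_cast_of_lt (by omega)]; exact hl)
  have hc : ∀ a b c : TorusPt d L, a - b = c → corrOne d L N β a b = gg d L N β c := by
    intro a b c h
    rw [corr_trans, ← corr_neg, neg_sub, h]; rfl
  rw [hc _ _ (Function.update w i ((k + l + s : ℕ) : ZMod L)),
    hc _ _ (Function.update 0 i ((2 * k + s : ℕ) : ZMod L)),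
    hc _ _ (Function.update 0 i ((2 * l + s : ℕ) : ZMod L))] at key
  · exact key
  all_goals
    ext j
    by_cases hj : j = i
    · subst hj; simp [refl_apply]; try ring
    · simp [refl_apply, hj]

lemma gg_axis (hL : Even L) (β : ℝ) (hβ : 0 ≤ β) (i : Fin d) (n : ℕ) (hn : n ≤ L)
    (w : TorusPt d L) :
    gg d L N β (Function.update w i (n : ZMod L)) ≤
      gg d L N β (Function.update 0 i (n : ZMod L)) := by
  have := gg_conv (N := N) hL β hβ i (n % 2) (by omega) (n / 2) (n / 2) (by omega) (by omega) w
  rw [show n / 2 + n / 2 + n % 2 = n by omega, show 2 * (n / 2) + n % 2 = n by omega] at this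
  linarith

lemma gg_sym (β : ℝ) (i : Fin d) (n : ℕ) (hn : n ≤ L) :
    gg d L N β (Function.update 0 i ((L - n : ℕ) : ZMod L)) =
      gg d L N β (Function.update 0 i (n : ZMod L)) := by
  unfold gg
  rw [← corr_neg]
  congr 1
  ext j
  by_cases hj : j = i
  · subst hj; simp [Nat.cast_sub hn]
  · simp [hj]

lemma gg_step (hL : Even L) (β : ℝ) (hβ : 0 ≤ β) (i : Fin d) (n : ℕ) (hn : n + 2 ≤ L) :
    2 * gg d L N β (Function.update 0 i ((n + 1 : ℕ) : ZMod L)) ≤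
      gg d L N β (Function.update 0 i (n : ZMod L)) +
      gg d L N β (Function.update 0 i ((n + 2 : ℕ) : ZMod L)) := by
  have := gg_conv (N := N) hL β hβ i (n % 2) (by omega) (n / 2) (n / 2 + 1) (by omega) (by omega) 0
  rwa [show n / 2 + (n / 2 + 1) + n % 2 = n + 1 by omega,
    show 2 * (n / 2) + n % 2 = n by omega, show 2 * (n / 2 + 1) + n % 2 = n + 2 by omega] at this

lemma gg_anti (hL : Even L) (β : ℝ) (hβ : 0 ≤ β) (i : Fin d) (m n : ℕ) (hmn : m ≤ n)
    (hn : 2 * n ≤ L) :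
    gg d L N β (Function.update 0 i (n : ZMod L)) ≤
      gg d L N β (Function.update 0 i (m : ZMod L)) := by
  set v : ℕ → ℝ := fun n => gg d L N β (Function.update 0 i (n : ZMod L)) with hv
  have hstep : ∀ n, n + 2 ≤ L → 2 * v (n + 1) ≤ v n + v (n + 2) := fun n h =>
    gg_step hL β hβ i n h
  have hsym : ∀ n, n ≤ L → v (L - n) = v n := fun n h => gg_sym β i n h
  have hD : ∀ j p, p + j + 1 ≤ L → v (p + 1) - v p ≤ v (p + j + 1) - v (p + j) := by
    intro j
    induction j with
    | zero => intro p _; simp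
    | succ j ih =>
      intro p hp
      have h1 := ih p (by omega)
      have h2 := hstep (p + j) (by omega)
      have e1 : p + (j + 1) + 1 = p + j + 2 := by ring
      have e2 : p + (j + 1) = p + j + 1 := by ring
      rw [e1, e2]; linarith
  have hdec : ∀ p, 2 * (p + 1) ≤ L → v (p + 1) ≤ v p := by
    intro p hp
    have h1 := hD (L - 1 - 2 * p) p (by omega)
    rw [show p + (L - 1 - 2 * p) + 1 = L - p by omega,
      show p + (L - 1 - 2 * p) = L - (p + 1) by omega, hsym _ (by omega), hsym _ (by omega)] at h1
    linarith
  change v n ≤ v m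
  induction n, hmn using Nat.le_induction with
  | base => exact le_rfl
  | succ n hmn ih => exact (hdec n hn).trans (ih (by omega))

lemma gg_box (hL : Even L) (β : ℝ) (hβ : 0 ≤ β) (z x : TorusPt d L) (hx : inBoxQ z x) (i : Fin d) :
    gg d L N β z ≤ gg d L N β (Function.update 0 i (x i)) := by
  have hz := ZMod.val_lt (z i)
  have hxv := ZMod.val_lt (x i)
  have h1 : gg d L N β z ≤ gg d L N β (Function.update 0 i (((z i).val : ℕ) : ZMod L)) := by
    have := gg_axis (N := N) hL β hβ i (z i).val hz.le z
    have e : Function.update z i (((z i).val : ℕ) : ZMod L) = z := by simp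
    rwa [e] at this
  have h2 : gg d L N β (Function.update 0 i ((hatCoord z i : ℕ) : ZMod L)) =
      gg d L N β (Function.update 0 i (((z i).val : ℕ) : ZMod L)) := by
    unfold hatCoord
    rcases min_choice (z i).val (L - (z i).val) with h | h
    · rw [h]
    · rw [h, gg_sym _ _ _ hz.le]
  have hh : 2 * hatCoord z i ≤ L := by unfold hatCoord; omega
  have e : Function.update (0 : TorusPt d L) i (x i) =
      Function.update (0 : TorusPt d L) i (((x i).val : ℕ) : ZMod L) := by simp
  rw [e]
  refine (h1.trans_eq h2.symm).trans ?_
  rcases hx i with h | h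
  · exact gg_anti hL β hβ i _ _ h hh
  · rw [← gg_sym _ _ _ hxv.le]
    exact gg_anti hL β hβ i _ _ (by omega) hh

/-- Triangle inequality along the axes. -/
lemma gg_tri (β δ : ℝ) (x : TorusPt d L)
    (h : ∀ i, 1 / (N : ℝ) - δ ≤ gg d L N β (Function.update 0 i (x i))) :
    1 / (N : ℝ) - ((Finset.univ.filter fun i => x i ≠ 0).card : ℝ) ^ 2 * δ ≤ gg d L N β x := by
  set S := Finset.univ.filter fun i => x i ≠ 0 with hS
  set p : ℕ → TorusPt d L := fun n k => if k.val < n then x k else 0 with hp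
  have hp0 : p 0 = torusOrigin d L := by ext k; simp [hp, torusOrigin]
  have hpd : p d = x := by ext k; simp [hp]
  have hdiff : ∀ j : Fin d, p (j.val + 1) - p j.val =
      Function.update (0 : TorusPt d L) j (x j) := by
    intro j; ext k
    by_cases hk : k = j
    · subst hk; simp [hp]
    · have : k.val ≠ j.val := fun h => hk (Fin.ext h)
      have h2 : (k.val < j.val + 1) ↔ (k.val < j.val) := by omega
      simp only [hp, Pi.sub_apply, h2, sub_self, Function.update_of_ne hk, Pi.zero_apply]
  have hsum : ∀ φ : SpinCfg d L N,
      (φ (torusOrigin d L) : EuclideanSpace ℝ (Fin N)) 0 - (φ x : EuclideanSpace ℝ (Fin N)) 0 =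
      ∑ j ∈ S, ((φ (p j.val) : EuclideanSpace ℝ (Fin N)) 0 -
        (φ (p (j.val + 1)) : EuclideanSpace ℝ (Fin N)) 0) := by
    intro φ
    have h1 := Finset.sum_range_sub' (fun n => (φ (p n) : EuclideanSpace ℝ (Fin N)) 0) d
    simp only [hp0, hpd] at h1
    rw [← h1, Finset.sum_range]
    symm
    refine Finset.sum_subset (Finset.subset_univ _) fun j _ hj => ?_
    have hxj : x j = 0 := by simpa [hS] using hj
    have : p (j.val + 1) = p j.val := by
      have := hdiff j
      rw [hxj, Function.update_eq_self_iff.2 (by simp), sub_eq_zero] at this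
      exact this
    rw [this, sub_self]
  have hle : gibbsExp d L N β (fun φ => ((φ (torusOrigin d L) : EuclideanSpace ℝ (Fin N)) 0 -
      (φ x : EuclideanSpace ℝ (Fin N)) 0) ^ 2) ≤
      (S.card : ℝ) * ∑ j ∈ S, gibbsExp d L N β (fun φ =>
        ((φ (p j.val) : EuclideanSpace ℝ (Fin N)) 0 -
        (φ (p (j.val + 1)) : EuclideanSpace ℝ (Fin N)) 0) ^ 2) := by
    rw [← gibbs_sum _ _ _ (fun j => by fun_prop), ← gibbs_smul]
    refine gibbs_mono _ (by fun_prop) (by fun_prop) fun φ => ?_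
    rw [hsum φ]
    exact sq_sum_le_card_mul_sum_sq
  simp only [vario] at hle
  have hb : ∀ j ∈ S, 2 * (1 / (N : ℝ) - corrOne d L N β (p j.val) (p (j.val + 1))) ≤ 2 * δ := by
    intro j _
    have := h j
    rw [corr_trans, hdiff]
    unfold gg at this
    linarith
  have h3 := Finset.sum_le_card_nsmul S _ _ hb
  rw [nsmul_eq_mul] at h3
  have h4 : (S.card : ℝ) * ∑ j ∈ S, 2 * (1 / (N : ℝ) - corrOne d L N β (p j.val) (p (j.val + 1)))
      ≤ (S.card : ℝ) * (S.card * (2 * δ)) := by gcongr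
  unfold gg
  nlinarith

lemma sq_pred_le (d : ℕ) (hd : 2 ≤ d) : (d - 1) ^ 2 ≤ 2 ^ d := by
  obtain ⟨m, rfl⟩ := Nat.exists_eq_add_of_le hd
  have : ∀ m : ℕ, (m + 1) ^ 2 ≤ 2 ^ (m + 2) ∧ 2 * m + 3 ≤ 2 ^ (m + 2) := by
    intro m
    induction m with
    | zero => norm_num
    | succ m ih =>
      obtain ⟨a, b⟩ := ih
      have : 2 ^ (m + 1 + 2) = 2 * 2 ^ (m + 2) := by ring
      rw [this]
      constructor <;> nlinarith
  have h := (this m).1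
  rw [show 2 + m - 1 = m + 1 by omega, add_comm 2 m]
  exact h

lemma final (d L N : ℕ) [NeZero L] [NeZero N] (hd : 2 ≤ d) (hL : Even L)
    (β : ℝ) (hβ : 0 ≤ β) (δ : ℝ) (hδ : 0 < δ) (z : TorusPt d L)
    (hz : 1 / (N : ℝ) - δ ≤ corrOne d L N β (torusOrigin d L) z)
    (x : TorusPt d L) (hx : inBoxQ z x) (hxH : ¬ inHL x) :
      (1 / (N : ℝ) - 2 ^ d * δ) * (β * Real.exp (-2 * d * β) / N) ^ (d - 2) ≤
        corrOne d L N β (torusOrigin d L) x := by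
  have hN : (1 : ℝ) ≤ N := by exact_mod_cast NeZero.one_le
  have hd' : (2 : ℝ) ≤ d := by exact_mod_cast hd
  have h0 := corr_nonneg (N := N) β hβ (torusOrigin d L) x
  have h1 := gg_tri (N := N) β δ x (fun i => hz.trans (gg_box hL β hβ z x hx i))
  have hcard : (Finset.univ.filter fun i => x i ≠ 0).card ≤ d - 1 := by
    unfold inHL at hxH
    push Not at hxH
    obtain ⟨j, hj⟩ := hxH.1
    have : (Finset.univ.filter fun i => x i ≠ 0) ⊆ Finset.univ.erase j := by
      intro i hi
      simp only [Finset.mem_filter, Finset.mem_univ, true_and] at hi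
      simp only [Finset.mem_erase, Finset.mem_univ, and_true]
      rintro rfl; exact hi hj
    refine (Finset.card_le_card this).trans ?_
    simp
  have h2 : ((Finset.univ.filter fun i => x i ≠ 0).card : ℝ) ^ 2 ≤ 2 ^ d := by
    exact_mod_cast (Nat.pow_le_pow_left hcard 2).trans (sq_pred_le d hd)
  have h3 : 1 / (N : ℝ) - 2 ^ d * δ ≤ corrOne d L N β (torusOrigin d L) x := by
    unfold gg at h1; nlinarith
  have hc0 : 0 ≤ β * Real.exp (-2 * d * β) / N := by positivity
  have hc1 : β * Real.exp (-2 * d * β) / N ≤ 1 := by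
    rw [div_le_one (by linarith)]
    refine le_trans ?_ hN
    have e : Real.exp (-2 * d * β) * Real.exp (2 * d * β) = 1 := by
      rw [← Real.exp_add]; simp
    have h5 := Real.add_one_le_exp (2 * d * β)
    have h6 : β ≤ Real.exp (2 * d * β) := by nlinarith
    calc β * Real.exp (-2 * d * β) ≤ Real.exp (2 * d * β) * Real.exp (-2 * d * β) := by gcongr
      _ = 1 := by rw [mul_comm, e]
  have hp0 := pow_nonneg hc0 (d - 2)
  have hp1 := pow_le_one₀ (n := d - 2) hc0 hc1
  rcases le_total 0 (1 / (N : ℝ) - 2 ^ d * δ) with h | h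
  · exact (mul_le_of_le_one_right h hp1).trans h3
  · exact (mul_nonpos_of_nonpos_of_nonneg h hp0).trans h0

end Torus

end SpinAux

/-- **Propagation of a lower bound inside the box `Q_z` (points outside `H_L`).**
Let `δ > 0` and `z ∈ T_L ∩ H_L` with `‖z‖_∞ ≤ L/2`. If `⟨φ_o^1 φ_z^1⟩ ≥ 1/N - δ`, then
`⟨φ_o^1 φ_x^1⟩ ≥ (1/N - 2^d δ)(β e^{-2dβ}/N)^{d-2}` for every `x ∈ Q_z ∖ H_L`. -/
theorem spin_lower_bound_in_box_not_HL
    (d L N : ℕ) [NeZero L] [NeZero N] (hd : 2 ≤ d) (hL : Even L)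
    (β : ℝ) (hβ : 0 ≤ β) (δ : ℝ) (hδ : 0 < δ)
    (z : TorusPt d L) (hzH : inHL z) (hznorm : 2 * tnormInf z ≤ L)
    (hz : 1 / (N : ℝ) - δ ≤ corrOne d L N β (torusOrigin d L) z) :
    ∀ x : TorusPt d L, inBoxQ z x → ¬ inHL x →
      (1 / (N : ℝ) - 2 ^ d * δ) * (β * Real.exp (-2 * d * β) / N) ^ (d - 2) ≤
        corrOne d L N β (torusOrigin d L) x := by
  intro x hx hxH
  exact SpinAux.final d L N hd hL β hβ δ hδ z hz x hx hxH
end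

section
/- Let z = (z_1,…,z_d) ∈ T_L and i ∈ {1,…,d} be such that z_i is even and nonzero. Then 2 |Ω^{dim}({o, z})| ≤ |Ω^{dim}({o, (z_i − 1) e_i})| + |Ω^{dim}({o, (z_i + 1) e_i})|. -/
/-- The number `|Ω^{dim}(A)|` of dimer covers (perfect matchings) of the torus with the
vertices of `A` (and all edges incident to them) removed.  A dimer cover is encoded as
the involution `f` matching each remaining vertex to its partner. -/
noncomputable def dimerCount (d L : ℕ) (A : Finset (TorusPt d L)) : ℕ :=
  Nat.card {f : TorusPt d L → TorusPt d L //
    (∀ x ∈ A, f x = x) ∧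
      ∀ x, x ∉ A → f x ∉ A ∧ f x ≠ x ∧ torusAdj x (f x) ∧ f (f x) = x}

/-- Abstract dimer covers of a graph with the vertices of `A` removed. -/
def IsCover {V : Type*} (adj : V → V → Prop) (A : Finset V) (f : V → V) : Prop :=
  (∀ x ∈ A, f x = x) ∧ ∀ x, x ∉ A → f x ∉ A ∧ f x ≠ x ∧ adj x (f x) ∧ f (f x) = x

/-- Half configurations: covers of `H` minus the vertex `a`, where some vertices may be matched
to their mirror image outside `H`. -/
def IsHalf {V : Type*} (adj : V → V → Prop) (H : V → Prop) (a : V) (g : V → V) : Prop :=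
  (∀ x, ¬ H x → g x = x) ∧ g a = a ∧
    ∀ x, H x → x ≠ a → g x ≠ x ∧ adj x (g x) ∧ (H (g x) → g (g x) = x)

/-- The set of vertices of `H` matched outside. -/
def crossSet {V : Type*} (H : V → Prop) (g : V → V) : Set V := {x | H x ∧ ¬ H (g x)}

theorem IsCover.congr_card {V : Type*} (adj : V → V → Prop) (e : V ≃ V)
    (he : ∀ x y, adj (e x) (e y) ↔ adj x y) (A B : Finset V) (hAB : ∀ x, e x ∈ B ↔ x ∈ A) :
    Nat.card {f // IsCover adj A f} = Nat.card {f // IsCover adj B f} := by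
  refine Nat.card_congr ((e.arrowCongr e).subtypeEquiv fun f => ?_)
  unfold IsCover
  simp only [Equiv.arrowCongr_apply, Function.comp]
  rw [← e.forall_congr_right (q := fun x => x ∈ B → e (f (e.symm x)) = x),
    ← e.forall_congr_right (q := fun x => x ∉ B → e (f (e.symm x)) ∉ B ∧ e (f (e.symm x)) ≠ x ∧
      adj x (e (f (e.symm x))) ∧ e (f (e.symm (e (f (e.symm x))))) = x)]
  simp [hAB, he]

open Classical in
/-- Decomposition of a cover into two compatible half configurations. -/
noncomputable def coverEquiv {V : Type*} (adj : V → V → Prop)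
    (hsymm : ∀ x y, adj x y → adj y x) (θ : V → V) (hθ : ∀ x, θ (θ x) = x)
    (hadj : ∀ x y, adj x y → adj (θ x) (θ y)) (H : V → Prop) (hH : ∀ x, H (θ x) ↔ ¬ H x)
    (hcross : ∀ x y, H x → ¬ H y → adj x y → y = θ x) (a b : V) (ha : H a) (hb : H b) :
    {f // IsCover adj {a, θ b} f} ≃
      {p : {g // IsHalf adj H a g} × {g // IsHalf adj H b g} //
        crossSet H p.1.1 = crossSet H p.2.1} where
  toFun f := ⟨(⟨fun x => if H x then f.1 x else x, by
      obtain ⟨f, h1, h2⟩ := f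
      simp only [Finset.mem_insert, Finset.mem_singleton] at h1 h2
      refine ⟨fun x hx => by simp [hx], by simp [h1], fun x hx hxa => ?_⟩
      have : x ≠ θ b := by rintro rfl; exact (hH b).1 hx hb
      have := h2 x (by tauto)
      simp only [hx, if_true]
      exact ⟨this.2.1, this.2.2.1, fun h => by simp [h, this]⟩⟩,
    ⟨fun x => if H x then θ (f.1 (θ x)) else x, by
      obtain ⟨f, h1, h2⟩ := f
      simp only [Finset.mem_insert, Finset.mem_singleton] at h1 h2
      refine ⟨fun x hx => by simp [hx], by simp [h1, hθ], fun x hx hxa => ?_⟩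
      have e1 : θ x ≠ a := by rintro rfl; exact (hH x).1 ha hx
      have e2 : θ x ≠ θ b := fun h => hxa (by rw [← hθ x, h, hθ])
      have := h2 (θ x) (by tauto)
      simp only [hx, if_true]
      refine ⟨fun h => this.2.1 (by rw [← hθ (f (θ x)), h]), ?_, fun h => by simp [h, this, hθ]⟩
      have h3 := hadj _ _ this.2.2.1
      rwa [hθ] at h3⟩), by
      obtain ⟨f, h1, h2⟩ := f
      simp only [Finset.mem_insert, Finset.mem_singleton] at h1 h2
      have e0 : ¬ H (θ b) := by rw [hH]; simpa using hb
      ext x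
      simp only [crossSet, Set.mem_ofPred_eq]
      refine and_congr_right fun hx => ?_
      simp only [hx, if_true, hH, not_not]
      have e0' : ¬ H (θ x) := by rw [hH]; simpa using hx
      constructor
      · intro h
        have hxa : x ≠ a := by rintro rfl; rw [h1 _ (Or.inl rfl)] at h; exact h hx
        have hxb : x ≠ θ b := by rintro rfl; exact e0 hx
        have := h2 x (by tauto)
        rw [← hcross _ _ hx h this.2.2.1, this.2.2.2]; exact hx
      · intro h
        have hxb : θ x ≠ θ b := by intro h'; rw [h', h1 _ (Or.inr rfl)] at h; exact e0 h
        have hxa : θ x ≠ a := by intro h'; rw [h'] at e0'; exact e0' ha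
        have := h2 (θ x) (by tauto)
        have h3 := hcross _ _ h e0' (hsymm _ _ this.2.2.1)
        have h4 : x = f (θ x) := by rw [← hθ x, h3, hθ, ← h3]
        have h5 := this.2.2.2
        rw [← h4] at h5
        rw [h5]; exact e0'⟩
  invFun p := ⟨fun x => if H x then p.1.1.1 x else θ (p.1.2.1 (θ x)), by
    obtain ⟨⟨⟨g, g1, g2, g3⟩, ⟨k, k1, k2, k3⟩⟩, hS⟩ := p
    have e0 : ¬ H (θ b) := by rw [hH]; simpa using hb
    have hS' : ∀ x, H x → (H (g x) ↔ H (k x)) := by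
      intro x hx
      have := congrArg (fun s => x ∈ s) hS
      simp only [crossSet, Set.mem_ofPred_eq, hx, true_and, eq_iff_iff] at this
      tauto
    simp only
    constructor
    · intro x hx
      simp only [Finset.mem_insert, Finset.mem_singleton] at hx
      rcases hx with rfl | rfl
      · simp [ha, g2]
      · simp [e0, hθ, k2]
    · intro x hx
      simp only [Finset.mem_insert, Finset.mem_singleton, not_or] at hx ⊢
      by_cases hxH : H x
      · simp only [hxH, if_true]
        obtain ⟨c1, c2, c3⟩ := g3 x hxH hx.1
        by_cases hg : H (g x)
        · simp only [hg, if_true]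
          have c3 := c3 hg
          refine ⟨⟨fun h => ?_, fun h => e0 (h ▸ hg)⟩, c1, c2, c3⟩
          rw [h, g2] at c3; exact hx.1 c3.symm
        · simp only [hg, if_false]
          have d1 := hcross _ _ hxH hg c2
          have hk : ¬ H (k x) := fun h => hg ((hS' x hxH).2 h)
          have hxb : x ≠ b := by rintro rfl; rw [k2] at hk; exact hk hxH
          have d2 := hcross _ _ hxH hk (k3 x hxH hxb).2.1
          refine ⟨⟨fun h => hg (h ▸ ha), fun h => ?_⟩, c1, c2, ?_⟩
          · rw [d1] at h; exact hxb (by rw [← hθ x, h, hθ])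
          · rw [d1, hθ, d2, hθ]
      · simp only [hxH, if_false]
        have hy : H (θ x) := (hH x).2 hxH
        have hyb : θ x ≠ b := fun h => hx.2 (by rw [← h, hθ])
        obtain ⟨c1, c2, c3⟩ := k3 (θ x) hy hyb
        have c2' := hadj _ _ c2
        rw [hθ] at c2'
        have c1' : θ (k (θ x)) ≠ x := fun h => c1 (by rw [← hθ (k (θ x)), h])
        by_cases hk : H (k (θ x))
        · have hk' : ¬ H (θ (k (θ x))) := by rw [hH]; simpa using hk
          simp only [hk', if_false, hθ]
          have c3 := c3 hk
          refine ⟨⟨fun h => hk' (h ▸ ha), fun h => ?_⟩, c1', c2', ?_⟩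
          · have : k (θ x) = b := by rw [← hθ (k (θ x)), h, hθ]
            rw [this, k2] at c3; exact hyb c3.symm
          · rw [c3, hθ]
        · have hk' : H (θ (k (θ x))) := (hH _).2 hk
          simp only [hk', if_true]
          have d1 := hcross _ _ hy hk c2
          rw [hθ] at d1
          have hg : ¬ H (g (θ x)) := fun h => hk ((hS' _ hy).1 h)
          have hya : θ x ≠ a := by intro h; rw [h, g2] at hg; exact hg ha
          have d2 := hcross _ _ hy hg (g3 _ hy hya).2.1
          rw [hθ] at d2
          rw [d1] at c1' c2' hk' ⊢
          refine ⟨⟨hya, fun h => e0 (h ▸ hk')⟩, c1', c2', d2⟩⟩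
  left_inv f := by
    apply Subtype.ext
    funext x
    by_cases hx : H x
    · simp [hx]
    · have hy : H (θ x) := (hH x).2 hx
      simp [hx, hy, hθ]
  right_inv p := by
    obtain ⟨⟨⟨g, g1, g2, g3⟩, ⟨k, k1, k2, k3⟩⟩, hS⟩ := p
    apply Subtype.ext
    refine Prod.ext (Subtype.ext ?_) (Subtype.ext ?_) <;> funext x <;> by_cases hx : H x
    · simp [hx]
    · simp [hx, g1]
    · have hy : ¬ H (θ x) := by rw [hH]; simpa using hx
      simp [hx, hy, hθ]
    · simp [hx, k1]

open Classical in
theorem card_match {α β σ : Type*} [Fintype α] [Fintype β] [Fintype σ] (u : α → σ) (v : β → σ) :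
    Nat.card {p : α × β // u p.1 = v p.2} =
      ∑ s, Nat.card {x // u x = s} * Nat.card {y // v y = s} := by
  have e : {p : α × β // u p.1 = v p.2} ≃ Σ s, {x // u x = s} × {y // v y = s} :=
    { toFun := fun p => ⟨v p.1.2, ⟨p.1.1, p.2⟩, ⟨p.1.2, rfl⟩⟩
      invFun := fun q => ⟨(q.2.1.1, q.2.2.1), q.2.1.2.trans q.2.2.2.symm⟩
      left_inv := fun p => rfl
      right_inv := by rintro ⟨s, ⟨x, hx⟩, ⟨y, rfl⟩⟩; rfl }
  rw [Nat.card_congr e, Nat.card_eq_fintype_card, Fintype.card_sigma]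
  simp [Fintype.card_prod, Nat.card_eq_fintype_card]

theorem reflection_bound {V : Type*} [Finite V] [DecidableEq V] (adj : V → V → Prop)
    (hsymm : ∀ x y, adj x y → adj y x) (θ : V → V) (hθ : ∀ x, θ (θ x) = x)
    (hadj : ∀ x y, adj x y → adj (θ x) (θ y)) (H : V → Prop) (hH : ∀ x, H (θ x) ↔ ¬ H x)
    (hcross : ∀ x y, H x → ¬ H y → adj x y → y = θ x) (a b : V) (ha : H a) (hb : H b) :
    2 * Nat.card {f // IsCover adj {a, θ b} f} ≤
      Nat.card {f // IsCover adj {a, θ a} f} + Nat.card {f // IsCover adj {b, θ b} f} := by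
  classical
  have := Fintype.ofFinite V
  have key : ∀ a b, H a → H b → Nat.card {f // IsCover adj {a, θ b} f} =
      ∑ s, Nat.card {x : {g // IsHalf adj H a g} // crossSet H x.1 = s} *
        Nat.card {x : {g // IsHalf adj H b g} // crossSet H x.1 = s} := by
    intro a b ha hb
    rw [← card_match (fun x : {g // IsHalf adj H a g} => crossSet H x.1)
      (fun x : {g // IsHalf adj H b g} => crossSet H x.1)]
    convert Nat.card_congr (coverEquiv adj hsymm θ hθ hadj H hH hcross a b ha hb)
  rw [key a b ha hb, key a a ha ha, key b b hb hb, ← Finset.sum_add_distrib, Finset.mul_sum]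
  refine Finset.sum_le_sum fun s _ => ?_
  generalize Nat.card {x : {g // IsHalf adj H a g} // crossSet H x.1 = s} = m
  generalize Nat.card {x : {g // IsHalf adj H b g} // crossSet H x.1 = s} = n
  zify
  nlinarith [sq_nonneg ((m : ℤ) - n)]

theorem zmod_val_refl {L : ℕ} [NeZero L] (u : ZMod L) : (-1 - u).val = L - 1 - u.val := by
  have h := u.val_lt
  have e : (-1 - u) = ((L - 1 - u.val : ℕ) : ZMod L) := by
    rw [Nat.sub_sub, Nat.cast_sub (by omega)]
    simp; ring
  rw [e, ZMod.val_natCast, Nat.mod_eq_of_lt (by omega)]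

theorem zmod_cross {L M : ℕ} [NeZero L] (hM : L = M + M) (u w : ZMod L) (hu : u.val < M)
    (hw : ¬ w.val < M) (h : w = u + 1 ∨ w = u - 1) : w = -1 - u := by
  apply ZMod.val_injective
  rw [zmod_val_refl]
  have hw' := w.val_lt
  rcases h with rfl | rfl
  · have e : (u + 1) = ((u.val + 1 : ℕ) : ZMod L) := by simp
    have e2 : (u + 1).val = u.val + 1 := by
      rw [e, ZMod.val_natCast, Nat.mod_eq_of_lt (by omega)]
    omega
  · by_cases h0 : u.val = 0
    · have : u = 0 := (ZMod.val_eq_zero u).1 h0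
      subst this
      have := zmod_val_refl (0 : ZMod L)
      simp only [sub_zero, zero_sub] at this ⊢
      exact this
    · exfalso
      have e : (u - 1) = ((u.val - 1 : ℕ) : ZMod L) := by
        rw [Nat.cast_sub (by omega)]; simp
      rw [e, ZMod.val_natCast, Nat.mod_eq_of_lt (by omega)] at hw
      omega

theorem torusAdj_iff {d L : ℕ} (x y : TorusPt d L) :
    torusAdj x y ↔ ∃ j, (y j = x j + 1 ∨ y j = x j - 1) ∧ ∀ k, k ≠ j → y k = x k := by
  unfold torusAdj
  refine exists_congr fun j => ?_
  rw [Function.eq_update_iff, Function.eq_update_iff]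
  tauto

/-- **Site-monotonicity for the dimer model at even points.**
If `z_i` is even and nonzero then
`2|Ω^{dim}({o,z})| ≤ |Ω^{dim}({o,(z_i-1)e_i})| + |Ω^{dim}({o,(z_i+1)e_i})|`. -/
theorem dimer_count_even_point_bound
    (d L : ℕ) [NeZero L] (hd : 2 ≤ d) (hL : Even L)
    (z : TorusPt d L) (i : Fin d) (heven : Even (z i).val) (hne : (z i).val ≠ 0) :
    2 * dimerCount d L {torusOrigin d L, z} ≤
      dimerCount d L {torusOrigin d L, axisPt d L i ((z i).val - 1)} +
        dimerCount d L {torusOrigin d L, axisPt d L i ((z i).val + 1)} := by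
    classical
  obtain ⟨M, hM⟩ := hL
  obtain ⟨k, hk⟩ := heven
  have hlt := (z i).val_lt
  have hzi : z i = 2 * (k : ZMod L) := by
    rw [← ZMod.natCast_zmod_val (z i), hk]; push_cast; ring
  have hL0 : (M : ZMod L) + M = 0 := by
    have := ZMod.natCast_self L
    rw [hM] at this ⊢
    push_cast at this; exact this
  obtain ⟨s, hs⟩ : ∃ s, M = k + 1 + s := ⟨M - (k + 1), by omega⟩
  have hs0 : 2 * (k : ZMod L) + 2 + 2 * s = 0 := by
    rw [hs] at hL0; push_cast at hL0; linear_combination hL0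
  let θ : TorusPt d L → TorusPt d L := fun x j => if j = i then 2 * (k : ZMod L) + 1 - x i else x j
  let H : TorusPt d L → Prop := fun x => (x i + s).val < M
  have hθi : ∀ x, θ x i = 2 * (k : ZMod L) + 1 - x i := fun x => by simp [θ]
  have hθj : ∀ x j, j ≠ i → θ x j = x j := fun x j h => by simp [θ, h]
  have hu : ∀ x, θ x i + s = -1 - (x i + s) := fun x => by
    rw [hθi]; linear_combination hs0
  have hθθ : ∀ x, θ (θ x) = x := fun x => by
    funext j
    by_cases hj : j = i
    · subst hj; rw [hθi, hθi]; ring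
    · rw [hθj _ _ hj, hθj _ _ hj]
  have main := reflection_bound (V := TorusPt d L) torusAdj
    (by
      intro x y h
      rw [torusAdj_iff] at h ⊢
      obtain ⟨j, h1, h2⟩ := h
      refine ⟨j, ?_, fun k hk => (h2 k hk).symm⟩
      rcases h1 with h | h <;> rw [h] <;> simp) θ hθθ
    (by
      intro x y h
      rw [torusAdj_iff] at h ⊢
      obtain ⟨j, h1, h2⟩ := h
      refine ⟨j, ?_, fun l hl => ?_⟩
      · by_cases hj : j = i
        · subst hj
          rw [hθi, hθi]
          rcases h1 with h | h <;> rw [h]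
          · right; ring
          · left; ring
        · rw [hθj _ _ hj, hθj _ _ hj]; exact h1
      · by_cases hj : l = i
        · subst hj; rw [hθi, hθi, h2 _ hl]
        · rw [hθj _ _ hj, hθj _ _ hj, h2 _ hl]) H
    (by
      intro x
      have := (x i + s).val_lt
      simp only [H, hu, zmod_val_refl]
      omega)
    (by
      intro x y hx hy h
      rw [torusAdj_iff] at h
      obtain ⟨j, h1, h2⟩ := h
      by_cases hj : j = i
      · subst hj
        have := zmod_cross hM (x j + s) (y j + s) hx hy (by
          rcases h1 with h | h <;> rw [h]
          · left; ring
          · right; ring)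
        rw [← hu] at this
        funext l
        by_cases hl : l = j
        · subst hl; exact add_right_cancel this
        · rw [hθj _ _ hl, h2 _ hl]
      · exfalso
        simp only [H] at hx hy
        rw [h2 i (Ne.symm hj)] at hy
        exact hy hx) (torusOrigin d L) (θ z)
    (by
      simp only [H, torusOrigin, zero_add]
      rw [ZMod.val_natCast, Nat.mod_eq_of_lt (by omega)]; omega)
    (by
      have : θ z i + (s : ZMod L) = ((s + 1 : ℕ) : ZMod L) := by
        rw [hθi, hzi]; push_cast; ring
      simp only [H, this]
      rw [ZMod.val_natCast, Nat.mod_eq_of_lt (by omega)]; omega)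
  rw [hθθ] at main
  have e1 : θ (torusOrigin d L) = axisPt d L i ((z i).val + 1) := by
    funext j
    by_cases hj : j = i
    · subst hj; rw [hθi]; simp [torusOrigin, axisPt, hzi]
    · rw [hθj _ _ hj]; simp [torusOrigin, axisPt, hj]
  rw [e1] at main
  have e2 := IsCover.congr_card (V := TorusPt d L) torusAdj (Equiv.addRight (θ z))
    (by
      intro x y
      simp only [torusAdj_iff, Equiv.coe_addRight, Pi.add_apply]
      refine exists_congr fun j => and_congr (or_congr ?_ ?_) (by simp)
      · rw [add_right_comm]; simp
      · rw [add_sub_right_comm]; simp)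
    {torusOrigin d L, axisPt d L i ((z i).val - 1)} {θ z, z} (by
      intro x
      have h1 : torusOrigin d L + θ z = θ z := by funext j; simp [torusOrigin]
      have h2 : axisPt d L i ((z i).val - 1) + θ z = z := by
        funext j
        by_cases hj : j = i
        · subst hj
          rw [Pi.add_apply, hθi]
          simp only [axisPt, if_true]
          rw [Nat.cast_sub (by omega), ZMod.natCast_zmod_val, hzi]
          push_cast; ring
        · rw [Pi.add_apply, hθj _ _ hj]; simp [axisPt, hj]
      simp only [Finset.mem_insert, Finset.mem_singleton, Equiv.coe_addRight]
      refine or_congr ?_ ?_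
      · nth_rewrite 2 [← h1]; exact add_left_inj _
      · nth_rewrite 2 [← h2]; exact add_left_inj _)
  rw [← e2, add_comm] at main
  unfold dimerCount
  unfold IsCover at main
  convert main
end
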